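/- arXiv:1607.04571 — 12 statements merged into one kernel-verified Lean document; each statement's English description precedes it below -/
import Mathlib

section
/- Let ε, ε̃, ε' ∈ {−1, 1}, let I ⊆ ℝ be an open interval, let h : I → ℝ be a function, and let f : I → ℝ be twice differentiable with ε'·(ε + ε̃·f'(s)²) > 0 for every s ∈ I. Then the following are equivalent: (i) for every s ∈ I, ε̃ · (d/ds)[ f'(s) / √(ε'(ε + ε̃ f'(s)²)) ] = (1 − f'(s)·h(s)) / √(ε'(ε + ε̃ f'(s)²)); (ii) for every s ∈ I, f''(s) = (ε̃ + ε f'(s)²)·(1 − f'(s)·h(s)). -/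
/-- Equivalence between the divergence form and the explicit form of the
translating-soliton ODE over a one-dimensional base. -/
theorem stmt_0 (ε εt ε' : ℝ) (hε : ε = 1 ∨ ε = -1) (hεt : εt = 1 ∨ εt = -1)
    (hε' : ε' = 1 ∨ ε' = -1) (a b : ℝ) (h f : ℝ → ℝ)
    (hf : ∀ s ∈ Set.Ioo a b, DifferentiableAt ℝ f s)
    (hf' : ∀ s ∈ Set.Ioo a b, DifferentiableAt ℝ (deriv f) s)
    (hpos : ∀ s ∈ Set.Ioo a b, 0 < ε' * (ε + εt * (deriv f s) ^ 2)) :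
    (∀ s ∈ Set.Ioo a b,
        εt * deriv (fun t => deriv f t / Real.sqrt (ε' * (ε + εt * (deriv f t) ^ 2))) s =
          (1 - deriv f s * h s) / Real.sqrt (ε' * (ε + εt * (deriv f s) ^ 2))) ↔
    (∀ s ∈ Set.Ioo a b,
        deriv (deriv f) s = (εt + ε * (deriv f s) ^ 2) * (1 - deriv f s * h s)) := by
  have e1 : ε * ε = 1 := by rcases hε with r | r <;> rw [r] <;> norm_num
  have e2 : εt * εt = 1 := by rcases hεt with r | r <;> rw [r] <;> norm_num
  have e3 : ε' * ε' = 1 := by rcases hε' with r | r <;> rw [r] <;> norm_num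
  refine forall₂_congr fun s hs => ?_
  have hQ := hpos s hs
  have hp := (hf' s hs).hasDerivAt
  have hD := hp.div ((((hp.pow 2).const_mul εt).const_add ε |>.const_mul ε').sqrt hQ.ne')
    (Real.sqrt_pos.2 hQ).ne'
  have hD' : deriv (fun t => deriv f t / Real.sqrt (ε' * (ε + εt * (deriv f t) ^ 2))) s = _ :=
    hD.deriv
  rw [hD']
  simp only [Pi.pow_apply]
  generalize deriv (deriv f) s = q
  generalize deriv f s = p at hQ ⊢
  have hW := Real.sqrt_pos.2 hQ
  have hW2 := Real.sq_sqrt hQ.le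
  generalize Real.sqrt (ε' * (ε + εt * p ^ 2)) = W at hW hW2 ⊢
  have key : (q * W - p * (ε' * (εt * (((2 : ℕ) : ℝ) * p ^ (2 - 1) * q)) / (2 * W))) / W ^ 2
      = ε' * ε * q / W ^ 3 := by
    have hW0 := hW.ne'
    field_simp
    push_cast
    simp only [pow_one]
    linear_combination 2 * q * hW2
  rw [key, ← mul_div_assoc, div_eq_div_iff (by positivity) hW.ne']
  constructor
  · intro H
    have H2 : εt * (ε' * ε * q) = (1 - p * h s) * W ^ 2 := by
      apply mul_right_cancel₀ hW.ne'
      linear_combination H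
    rw [hW2] at H2
    have : q = (εt * εt) * (ε' * ε') * (ε * ε) * q := by rw [e1, e2, e3]; ring
    rw [this]
    linear_combination εt * ε' * ε * H2 + (1 - p * h s) * (εt * ε * (ε + εt * p ^ 2) * e3
      + εt * e1 + ε * p ^ 2 * e2)
  · intro H
    rw [H]
    have : W ^ 3 = ε' * (ε + εt * p ^ 2) * W := by rw [← hW2]; ring
    rw [this]
    linear_combination (1 - p * h s) * ε' * W * (ε * e2 + εt * p ^ 2 * e1)
end

section
/- Let ε, ε̃ ∈ {−1, 1}, let I, J ⊆ ℝ be open intervals, let h : ℝ → ℝ be a function, and let f : ℝ → ℝ be twice differentiable on I satisfying the translating-soliton ODE f''(s) = (ε̃ + ε f'(s)²)(1 − f'(s)h(s)) for every s ∈ I. Let α : ℝ → ℝ be twice differentiable on J with α(J) ⊆ I, f(α(y)) = y for every y ∈ J, and α'(y) ≠ 0 for every y ∈ J. Then for every y ∈ J, α''(y) = (ε + ε̃ α'(y)²)·(h(α(y)) − α'(y)). -/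
/-- The ODE satisfied by a local inverse of a solution of the translating-soliton ODE. -/
theorem stmt_1 (ε εt : ℝ) (hε : ε = 1 ∨ ε = -1) (hεt : εt = 1 ∨ εt = -1)
    (a b c d : ℝ) (h f α : ℝ → ℝ)
    (hf : ∀ s ∈ Set.Ioo a b, DifferentiableAt ℝ f s)
    (hf' : ∀ s ∈ Set.Ioo a b, DifferentiableAt ℝ (deriv f) s)
    (hODE : ∀ s ∈ Set.Ioo a b,
      deriv (deriv f) s = (εt + ε * (deriv f s) ^ 2) * (1 - deriv f s * h s))
    (hα : ∀ y ∈ Set.Ioo c d, DifferentiableAt ℝ α y)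
    (hα' : ∀ y ∈ Set.Ioo c d, DifferentiableAt ℝ (deriv α) y)
    (hmaps : ∀ y ∈ Set.Ioo c d, α y ∈ Set.Ioo a b)
    (hinv : ∀ y ∈ Set.Ioo c d, f (α y) = y)
    (hne : ∀ y ∈ Set.Ioo c d, deriv α y ≠ 0) :
    ∀ y ∈ Set.Ioo c d,
      deriv (deriv α) y = (ε + εt * (deriv α y) ^ 2) * (h (α y) - deriv α y) := by
  have key : ∀ y ∈ Set.Ioo c d, deriv f (α y) * deriv α y = 1 := by
    intro y hy
    have h1 : HasDerivAt (fun z => f (α z)) (deriv f (α y) * deriv α y) y :=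
      HasDerivAt.comp y (hf _ (hmaps y hy)).hasDerivAt (hα y hy).hasDerivAt
    have h2 : HasDerivAt (fun z => f (α z)) 1 y := by
      refine (hasDerivAt_id y).congr_of_eventuallyEq ?_
      filter_upwards [isOpen_Ioo.mem_nhds hy] with z hz
      exact hinv z hz
    exact h1.unique h2
  intro y hy
  have h0 : HasDerivAt (fun z => deriv f (α z)) (deriv (deriv f) (α y) * deriv α y) y :=
    HasDerivAt.comp y (hf' _ (hmaps y hy)).hasDerivAt (hα y hy).hasDerivAt
  have h1 : HasDerivAt (fun z => deriv f (α z) * deriv α z)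
      (deriv (deriv f) (α y) * deriv α y * deriv α y + deriv f (α y) * deriv (deriv α) y) y :=
    h0.mul (hα' y hy).hasDerivAt
  have h2 : HasDerivAt (fun z => deriv f (α z) * deriv α z) 0 y := by
    refine (hasDerivAt_const y (1 : ℝ)).congr_of_eventuallyEq ?_
    filter_upwards [isOpen_Ioo.mem_nhds hy] with z hz
    exact key z hz
  have e := h1.unique h2
  have k := key y hy
  have hp := hne y hy
  rw [hODE _ (hmaps y hy)] at e
  have hF : deriv f (α y) = (deriv α y)⁻¹ := eq_inv_of_mul_eq_one_left k
  rw [hF] at e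
  generalize deriv α y = p at *
  generalize deriv (deriv α) y = q at *
  field_simp at e
  linear_combination e
end

section
/- Let ε̃ ∈ {−1, 1} and set ε = −ε̃. Let I ⊆ ℝ be an open interval and h : I → ℝ be continuously differentiable. Then for every s₀ ∈ I, every f₀ ∈ ℝ, and every f₁ ∈ (−1, 1), there exists a twice continuously differentiable function f : I → ℝ with f(s₀) = f₀, f'(s₀) = f₁, such that f'(s) ∈ (−1, 1) for every s ∈ I, and f''(s) = ε̃·(1 − f'(s)²)·(1 − f'(s)h(s)) for every s ∈ I. -/
open Set in
theorem aux_tanh_hasDerivAt (x : ℝ) :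
    HasDerivAt Real.tanh (1 - Real.tanh x ^ 2) x := by
  have hc : Real.cosh x ≠ 0 := (Real.cosh_pos x).ne'
  have h1 := (Real.hasDerivAt_sinh x).div (Real.hasDerivAt_cosh x) hc
  have h2 : Real.tanh = Real.sinh / Real.cosh := by
    funext y
    simp [Real.tanh_eq_sinh_div_cosh]
  have h3 : 1 - Real.tanh x ^ 2 =
      (Real.cosh x * Real.cosh x - Real.sinh x * Real.sinh x) / Real.cosh x ^ 2 := by
    rw [Real.tanh_eq_sinh_div_cosh]
    field_simp
  rw [h3, h2]
  exact h1

theorem aux_tanh_mem (x : ℝ) : Real.tanh x ∈ Set.Ioo (-1 : ℝ) 1 :=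
  ⟨Real.neg_one_lt_tanh x, Real.tanh_lt_one x⟩

theorem aux_tanh_lip (x y : ℝ) : |Real.tanh x - Real.tanh y| ≤ |x - y| := by
  have := Convex.norm_image_sub_le_of_norm_hasDerivWithin_le (f := Real.tanh) (s := Set.univ)
    (f' := fun x => 1 - Real.tanh x ^ 2) (C := 1) (x := y) (y := x)
    (fun z _ => (aux_tanh_hasDerivAt z).hasDerivWithinAt)
    (fun z _ => by
      have := aux_tanh_mem z
      rw [Real.norm_eq_abs, abs_le]
      constructor <;> nlinarith [this.1, this.2])
    convex_univ (Set.mem_univ _) (Set.mem_univ _)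
  simpa using this

/-- The vector field in the variable `u` with `w = tanh u`. -/
noncomputable def auxV (e : ℝ) (h : ℝ → ℝ) (t u : ℝ) : ℝ := e * (1 - Real.tanh u * h t)

theorem auxV_lip (e : ℝ) (he : |e| = 1) (h : ℝ → ℝ) (M : NNReal) (t : ℝ) (ht : |h t| ≤ M)
    (s : Set ℝ) : LipschitzOnWith M (auxV e h t) s := by
  apply LipschitzOnWith.of_dist_le_mul
  intro x _ y _
  rw [Real.dist_eq, Real.dist_eq]
  have : auxV e h t x - auxV e h t y = -e * (h t * (Real.tanh x - Real.tanh y)) := by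
    unfold auxV; ring
  rw [this, abs_mul, abs_neg, he, one_mul, abs_mul]
  exact mul_le_mul ht (aux_tanh_lip x y) (abs_nonneg _) M.2

theorem aux_bound (h : ℝ → ℝ) (c d : ℝ) (hc : ContinuousOn h (Set.Icc c d)) :
    ∃ M : NNReal, ∀ t ∈ Set.Icc c d, |h t| ≤ M := by
  obtain ⟨C, hC⟩ := isCompact_Icc.exists_bound_of_continuousOn hc
  exact ⟨C.toNNReal, fun t ht => (hC t ht).trans (Real.le_coe_toNNReal C)⟩

theorem aux_exists (e : ℝ) (he : |e| = 1) (h : ℝ → ℝ) (c d s₀ u₀ : ℝ)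
    (hs : s₀ ∈ Set.Icc c d) (hc : ContinuousOn h (Set.Icc c d)) :
    ∃ u : ℝ → ℝ, u s₀ = u₀ ∧
      ∀ t ∈ Set.Ioo c d, HasDerivAt u (auxV e h t (u t)) t := by
  obtain ⟨M, hM⟩ := aux_bound h c d hc
  have hm : 0 ≤ max (d - s₀) (s₀ - c) := le_max_of_le_left (by linarith [hs.2])
  have hP : IsPicardLindelof (auxV e h) (⟨s₀, hs⟩ : Set.Icc c d) u₀
      ((1 + M) * ⟨max (d - s₀) (s₀ - c), hm⟩) 0 (1 + M) M := by
    refine ⟨fun t ht => auxV_lip e he h M t (hM t ht) _, fun x _ => ?_, fun t ht x _ => ?_, ?_⟩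
    · unfold auxV
      fun_prop
    · unfold auxV
      rw [Real.norm_eq_abs, abs_mul, he, one_mul]
      have h1 := aux_tanh_mem x
      have h2 : |Real.tanh x * h t| ≤ 1 * M := by
        rw [abs_mul]
        exact mul_le_mul (abs_le.2 ⟨h1.1.le, h1.2.le⟩) (hM t ht) (abs_nonneg _) zero_le_one
      rw [abs_le] at h2 ⊢
      push_cast
      constructor <;> linarith [h2.1, h2.2]
    · exact le_of_eq (sub_zero _).symm
  obtain ⟨u, hu0, hu⟩ := hP.exists_eq_forall_mem_Icc_hasDerivWithinAt₀
  exact ⟨u, hu0, fun t ht => (hu t (Set.Ioo_subset_Icc_self ht)).hasDerivAt (Icc_mem_nhds ht.1 ht.2)⟩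

open Set in
theorem aux_global (e : ℝ) (he : |e| = 1) (h : ℝ → ℝ) (a b s₀ u₀ : ℝ)
    (hs : s₀ ∈ Set.Ioo a b) (hc : ContinuousOn h (Set.Ioo a b)) :
    ∃ u : ℝ → ℝ, u s₀ = u₀ ∧
      ∀ t ∈ Set.Ioo a b, HasDerivAt u (auxV e h t (u t)) t := by
  have key : ∀ s : ℝ, ∃ v : ℝ → ℝ, s ∈ Ioo a b → v s₀ = u₀ ∧
      ∀ t ∈ Set.Ioo ((a + min s s₀) / 2) ((b + max s s₀) / 2),
        HasDerivAt v (auxV e h t (v t)) t := by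
    intro s
    by_cases hsm : s ∈ Ioo a b
    · have h1 : a < min s s₀ := lt_min hsm.1 hs.1
      have h2 : max s s₀ < b := max_lt hsm.2 hs.2
      obtain ⟨v, hv⟩ := aux_exists e he h ((a + min s s₀) / 2) ((b + max s s₀) / 2) s₀ u₀
        ⟨by linarith [min_le_right s s₀], by linarith [le_max_right s s₀]⟩
        (hc.mono fun t ht => ⟨by linarith [ht.1], by linarith [ht.2]⟩)
      exact ⟨v, fun _ => hv⟩
    · exact ⟨0, fun h => absurd h hsm⟩
  choose U hU using key
  refine ⟨fun s => U s s, (hU s₀ hs).1, fun t ht => ?_⟩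
  have h1 : a < min t s₀ := lt_min ht.1 hs.1
  have h2 : max t s₀ < b := max_lt ht.2 hs.2
  have htI : t ∈ Ioo ((a + min t s₀) / 2) ((b + max t s₀) / 2) :=
    ⟨by linarith [min_le_left t s₀], by linarith [le_max_left t s₀]⟩
  refine ((hU t ht).2 t htI).congr_of_eventuallyEq ?_
  filter_upwards [Ioo_mem_nhds htI.1 htI.2] with r hr
  have hrm : r ∈ Ioo a b := ⟨by linarith [hr.1], by linarith [hr.2]⟩
  have h3 : a < min r s₀ := lt_min hrm.1 hs.1
  have h4 : max r s₀ < b := max_lt hrm.2 hs.2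
  obtain ⟨M, hM⟩ := aux_bound h ((a + min t s₀) / 2) ((b + max t s₀) / 2)
    (hc.mono fun x hx => ⟨by linarith [hx.1], by linarith [hx.2]⟩)
  have := ODE_solution_unique_of_mem_Ioo (v := auxV e h) (s := fun _ => univ) (K := M)
    (a := max ((a + min t s₀) / 2) ((a + min r s₀) / 2))
    (b := min ((b + max t s₀) / 2) ((b + max r s₀) / 2)) (t₀ := s₀) (f := U r) (g := U t)
    (fun x hx => auxV_lip e he h M x (hM x
      ⟨(lt_of_le_of_lt (le_max_left _ _) hx.1).le, (lt_of_lt_of_le hx.2 (min_le_left _ _)).le⟩) _)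
    ⟨max_lt (by linarith [min_le_right t s₀]) (by linarith [min_le_right r s₀]),
      lt_min (by linarith [le_max_right t s₀]) (by linarith [le_max_right r s₀])⟩
    (fun x hx => ⟨(hU r hrm).2 x ⟨lt_of_le_of_lt (le_max_right _ _) hx.1,
      lt_of_lt_of_le hx.2 (min_le_right _ _)⟩, mem_univ _⟩)
    (fun x hx => ⟨(hU t ht).2 x ⟨lt_of_le_of_lt (le_max_left _ _) hx.1,
      lt_of_lt_of_le hx.2 (min_le_left _ _)⟩, mem_univ _⟩)
    ((hU r hrm).1.trans (hU t ht).1.symm)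
  exact this ⟨max_lt hr.1 (by linarith [min_le_left r s₀]),
    lt_min hr.2 (by linarith [le_max_left r s₀])⟩

/-- Global existence of solutions of the translating-soliton ODE when ε·ε̃ = −1. -/
theorem stmt_2 (εt : ℝ) (hεt : εt = 1 ∨ εt = -1) (a b : ℝ) (h : ℝ → ℝ)
    (hh : ContDiffOn ℝ 1 h (Set.Ioo a b))
    (s₀ : ℝ) (hs₀ : s₀ ∈ Set.Ioo a b) (f₀ : ℝ) (f₁ : ℝ) (hf₁ : f₁ ∈ Set.Ioo (-1 : ℝ) 1) :
    ∃ f : ℝ → ℝ, ContDiffOn ℝ 2 f (Set.Ioo a b) ∧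
      f s₀ = f₀ ∧ deriv f s₀ = f₁ ∧
      (∀ s ∈ Set.Ioo a b, deriv f s ∈ Set.Ioo (-1 : ℝ) 1) ∧
      ∀ s ∈ Set.Ioo a b,
        deriv (deriv f) s = εt * (1 - (deriv f s) ^ 2) * (1 - deriv f s * h s) := by
  have he : |εt| = 1 := by rcases hεt with h | h <;> simp [h]
  have hc := hh.continuousOn
  obtain ⟨u, hu0, hu⟩ := aux_global εt he h a b s₀ (Real.artanh f₁) hs₀ hc
  obtain ⟨w, hw⟩ : ∃ w : ℝ → ℝ, w = fun s => Real.tanh (u s) := ⟨_, rfl⟩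
  have hwmem : ∀ s, w s ∈ Set.Ioo (-1 : ℝ) 1 := fun s => by rw [hw]; exact aux_tanh_mem _
  have hwd : ∀ s ∈ Set.Ioo a b, HasDerivAt w (εt * (1 - (w s) ^ 2) * (1 - w s * h s)) s := by
    intro s hs
    have := (aux_tanh_hasDerivAt (u s)).comp s (hu s hs)
    rw [hw]
    have h3 : εt * (1 - Real.tanh (u s) ^ 2) * (1 - Real.tanh (u s) * h s) =
        (1 - Real.tanh (u s) ^ 2) * auxV εt h s (u s) := by
      unfold auxV
      ring
    simp only [h3]
    exact this
  have hwc : ContinuousOn w (Set.Ioo a b) := HasDerivAt.continuousOn hwd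
  have hfd : ∀ s ∈ Set.Ioo a b, HasDerivAt (fun s => f₀ + ∫ x in s₀..s, w x) (w s) s := by
    intro s hs
    refine (intervalIntegral.integral_hasDerivAt_right ?_ ?_ ?_).const_add f₀
    · apply ContinuousOn.intervalIntegrable
      exact hwc.mono (Set.ordConnected_Ioo.uIcc_subset hs₀ hs)
    · exact hwc.stronglyMeasurableAtFilter isOpen_Ioo s hs
    · exact (hwd s hs).continuousAt
  have hderiv : ∀ s ∈ Set.Ioo a b, deriv (fun s => f₀ + ∫ x in s₀..s, w x) s = w s :=
    fun s hs => (hfd s hs).deriv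
  have hw1 : ContDiffOn ℝ 1 w (Set.Ioo a b) := by
    rw [show (1 : WithTop ℕ∞) = 0 + 1 by norm_num,
      contDiffOn_succ_iff_deriv_of_isOpen isOpen_Ioo]
    refine ⟨fun s hs => (hwd s hs).differentiableAt.differentiableWithinAt, by simp, ?_⟩
    rw [contDiffOn_zero]
    refine ContinuousOn.congr (f := fun s => εt * (1 - (w s) ^ 2) * (1 - w s * h s)) ?_
      fun s hs => (hwd s hs).deriv
    fun_prop
  refine ⟨fun s => f₀ + ∫ x in s₀..s, w x, ?_, by simp, ?_, ?_, ?_⟩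
  · rw [show (2 : WithTop ℕ∞) = 1 + 1 by norm_num,
      contDiffOn_succ_iff_deriv_of_isOpen isOpen_Ioo]
    exact ⟨fun s hs => (hfd s hs).differentiableAt.differentiableWithinAt, by simp,
      hw1.congr hderiv⟩
  · rw [hderiv s₀ hs₀, hw]
    simp only [hu0]
    exact Real.tanh_artanh hf₁
  · intro s hs
    rw [hderiv s hs]
    exact hwmem s
  · intro s hs
    rw [hderiv s hs, ← (hwd s hs).deriv]
    apply Filter.EventuallyEq.deriv_eq
    filter_upwards [isOpen_Ioo.mem_nhds hs] with r hr
    exact hderiv r hr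
end

section
/- Let n ≥ 2 be an integer and a ∈ ℝ. There exists a function f : ℝ → ℝ which is infinitely differentiable on [0, +∞) (i.e., ContDiffOn of every order on the closed half-line), with f(0) = a and f'(0) = 0, and such that for every s > 0, f''(s) = (1 + f'(s)²)·(1 − (n−1)·f'(s)/s). -/
open Set

noncomputable section

def J (p : ℕ) (h : ℝ → ℝ) (s : ℝ) : ℝ := ∫ t in (0:ℝ)..1, t ^ p * h (s * t)

lemma J_cont (p : ℕ) {h : ℝ → ℝ} (hh : Continuous h) : Continuous (J p h) := by
  unfold J
  apply intervalIntegral.continuous_parametric_intervalIntegral_of_continuous'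
  simp only [Function.uncurry_def]
  fun_prop

lemma J_hasDerivAt (p : ℕ) {h : ℝ → ℝ} (hh : ContDiff ℝ 1 h) (s : ℝ) :
    HasDerivAt (J p h) (J (p + 1) (deriv h) s) s := by
  have hd : Continuous (deriv h) := hh.continuous_deriv le_rfl
  have hc := hh.continuous
  obtain ⟨C, hC⟩ := (isCompact_Icc (a := -(|s| + 1)) (b := |s| + 1)).exists_bound_of_continuousOn
    hd.continuousOn
  have := (intervalIntegral.hasDerivAt_integral_of_dominated_loc_of_deriv_le
    (μ := MeasureTheory.volume) (a := 0) (b := 1) (x₀ := s) (s := Metric.ball s 1)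
    (F := fun x t => t ^ p * h (x * t)) (F' := fun x t => t ^ (p + 1) * deriv h (x * t))
    (bound := fun _ => C) (Metric.ball_mem_nhds s one_pos) ?_ ?_ ?_ ?_ ?_ ?_).2
  · exact this
  · exact Filter.Eventually.of_forall fun x =>
      (by fun_prop : Continuous fun t => t ^ p * h (x * t)).aestronglyMeasurable
  · exact (by fun_prop : Continuous fun t => t ^ p * h (s * t)).intervalIntegrable _ _
  · exact (by fun_prop : Continuous fun t => t ^ (p + 1) * deriv h (s * t)).aestronglyMeasurable
  · refine Filter.Eventually.of_forall fun t ht x hx => ?_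
    rw [uIoc_of_le zero_le_one] at ht
    rw [Metric.mem_ball, Real.dist_eq] at hx
    have hx1 : |x| ≤ |s| + 1 := by
      have := abs_sub_abs_le_abs_sub x s
      linarith
    have hxt : |x * t| ≤ |s| + 1 := by
      rw [abs_mul, abs_of_pos ht.1]
      nlinarith [ht.1, ht.2, abs_nonneg x]
    have h1 := hC (x * t) (abs_le.mp hxt)
    have h2 : t ^ (p + 1) ≤ 1 := pow_le_one₀ ht.1.le ht.2
    have h3 : 0 ≤ t ^ (p + 1) := pow_nonneg ht.1.le _
    rw [norm_mul, Real.norm_of_nonneg h3]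
    nlinarith [norm_nonneg (deriv h (x * t))]
  · simp
  · refine Filter.Eventually.of_forall fun t ht x hx => ?_
    have h1 : HasDerivAt h (deriv h (x * t)) (x * t) :=
      (hh.differentiable one_ne_zero _).hasDerivAt
    have h2 := (h1.comp x (hasDerivAt_mul_const t)).const_mul (t ^ p)
    exact h2.congr_deriv (by ring)

lemma J_contDiff (k : ℕ) : ∀ (p : ℕ) {h : ℝ → ℝ}, ContDiff ℝ k h → ContDiff ℝ k (J p h) := by
  induction k with
  | zero =>
    intro p h hh
    simp only [Nat.cast_zero, contDiff_zero] at hh ⊢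
    exact J_cont p hh
  | succ k ih =>
    intro p h hh
    have h1 : ContDiff ℝ 1 h := hh.of_le (by norm_cast; omega)
    push_cast at hh ⊢
    rw [contDiff_succ_iff_deriv] at hh ⊢
    refine ⟨fun s => (J_hasDerivAt p h1 s).differentiableAt, by simp, ?_⟩
    rw [funext fun s => (J_hasDerivAt p h1 s).deriv]
    exact ih _ hh.2.2

lemma J_pow (p : ℕ) (h : ℝ → ℝ) (s : ℝ) :
    s ^ (p + 1) * J p h s = ∫ r in (0:ℝ)..s, r ^ p * h r := by
  have := intervalIntegral.smul_integral_comp_mul_left (a := 0) (b := 1)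
    (fun r => r ^ p * h r) s
  simp only [mul_zero, mul_one, smul_eq_mul] at this
  rw [← this, J, pow_succ', mul_assoc, ← intervalIntegral.integral_const_mul]
  congr 1
  apply intervalIntegral.integral_congr
  intro t _
  simp only
  ring

lemma sJ_hasDerivAt (p : ℕ) {h : ℝ → ℝ} (hh : Continuous h) (s : ℝ) :
    HasDerivAt (fun s => s * J p h s) (h s - p * J p h s) s := by
  rcases eq_or_ne s 0 with rfl | hs
  · have e : h 0 - p * J p h 0 = J p h 0 := by
      simp only [J, zero_mul, intervalIntegral.integral_mul_const, integral_pow]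
      field_simp
      simp
    rw [e, hasDerivAt_iff_tendsto_slope]
    refine ((J_cont p hh).continuousAt.tendsto.mono_left nhdsWithin_le_nhds).congr' ?_
    filter_upwards [self_mem_nhdsWithin] with x hx
    have hx : x ≠ 0 := hx
    simp [slope_def_field, hx]
  · have hI : HasDerivAt (fun s => ∫ r in (0:ℝ)..s, r ^ p * h r) (s ^ p * h s) s := by
      have hc : Continuous fun r => r ^ p * h r := by fun_prop
      exact hc.integral_hasStrictDerivAt 0 s |>.hasDerivAt
    have hq := hI.div (hasDerivAt_pow p s) (pow_ne_zero p hs)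
    have hev : (fun s => s * J p h s) =ᶠ[nhds s]
        (fun s => (∫ r in (0:ℝ)..s, r ^ p * h r) / s ^ p) := by
      filter_upwards [eventually_ne_nhds hs] with x hx
      rw [← J_pow]
      field_simp
      ring
    refine (hq.congr_of_eventuallyEq hev).congr_deriv ?_
    rw [← J_pow]
    rcases p with _ | p
    · simp
    · simp only [Nat.add_sub_cancel]
      field_simp
      ring

lemma J_bound {p : ℕ} (hp : 1 ≤ p) {h : ℝ → ℝ} (hh : Continuous h) {A : ℝ} (hA : 0 ≤ A)
    (hb : ∀ r, |h r| ≤ A * Real.exp (5 * r ^ 2)) (s : ℝ) :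
    Real.exp (-(5 * s ^ 2)) * (s ^ 2 * |J p h s|) ≤ A / 10 := by
  have h1 : |J p h s| ≤ ∫ t in (0:ℝ)..1, A * (t * Real.exp (5 * (s * t) ^ 2)) := by
    rw [← Real.norm_eq_abs]
    refine intervalIntegral.norm_integral_le_of_norm_le zero_le_one
      (Filter.Eventually.of_forall fun t ht => ?_) ?_
    · have h2 : t ^ p ≤ t := by simpa using pow_le_pow_of_le_one ht.1.le ht.2 hp
      have h3 : 0 ≤ t ^ p := pow_nonneg ht.1.le _
      rw [norm_mul, Real.norm_of_nonneg h3, Real.norm_eq_abs]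
      calc t ^ p * |h (s * t)| ≤ t * (A * Real.exp (5 * (s * t) ^ 2)) :=
            mul_le_mul h2 (hb _) (abs_nonneg _) ht.1.le
        _ = _ := by ring
    · exact Continuous.intervalIntegrable (by fun_prop) _ _
  have h2 : s ^ 2 * ∫ t in (0:ℝ)..1, A * (t * Real.exp (5 * (s * t) ^ 2))
      = A / 10 * (Real.exp (5 * s ^ 2) - 1) := by
    rw [← intervalIntegral.integral_const_mul]
    rw [intervalIntegral.integral_eq_sub_of_hasDerivAt
      (f := fun t => A / 10 * Real.exp (5 * (s * t) ^ 2))]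
    · simp; ring
    · intro t _
      have := (((((hasDerivAt_id t).const_mul s).pow 2).const_mul 5).exp).const_mul (A / 10)
      refine this.congr_deriv ?_
      simp
      ring
    · exact Continuous.intervalIntegrable (by fun_prop) _ _
  calc Real.exp (-(5 * s ^ 2)) * (s ^ 2 * |J p h s|)
      ≤ Real.exp (-(5 * s ^ 2)) * (A / 10 * (Real.exp (5 * s ^ 2) - 1)) := by
        rw [← h2]; gcongr
    _ = A / 10 * (1 - Real.exp (-(5 * s ^ 2))) := by
        have : Real.exp (-(5 * s ^ 2)) * Real.exp (5 * s ^ 2) = 1 := by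
          rw [← Real.exp_add]; simp
        linear_combination (A / 10) * this
    _ ≤ A / 10 := by
        have := Real.exp_pos (-(5 * s ^ 2))
        nlinarith

lemma exists_sol {p : ℕ} (hp : 1 ≤ p) (c : ℝ) {G : ℝ → ℝ} (hG0 : G 0 = 0)
    (hG : ∀ x y, |G x - G y| ≤ 5 * |x - y|) (hGc : Continuous G) :
    ∃ w : ℝ → ℝ, Continuous w ∧ ∀ s, w s = c + s ^ 2 * J p (fun r => G (w r)) s := by
  let H : (BoundedContinuousFunction ℝ ℝ) → ℝ → ℝ := fun u r => G (Real.exp (5 * r ^ 2) * u r)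
  have Hc : ∀ u, Continuous (H u) := fun u => by
    have := u.continuous
    simp only [H]; fun_prop
  have Hd : ∀ u v r, |H u r - H v r| ≤ (5 * dist u v) * Real.exp (5 * r ^ 2) := by
    intro u v r
    refine (hG _ _).trans ?_
    rw [← mul_sub, abs_mul, abs_of_pos (Real.exp_pos _)]
    have := BoundedContinuousFunction.dist_coe_le_dist (f := u) (g := v) r
    rw [Real.dist_eq] at this
    nlinarith [Real.exp_pos (5 * r ^ 2)]
  have H0 : ∀ r, H 0 r = 0 := fun r => by simp [H, hG0]
  let P : (BoundedContinuousFunction ℝ ℝ) → ℝ → ℝ := fun u s =>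
    Real.exp (-(5 * s ^ 2)) * (c + s ^ 2 * J p (H u) s)
  have Pc : ∀ u, Continuous (P u) := fun u => by
    have := J_cont p (Hc u)
    simp only [P]; fun_prop
  have Pb : ∀ u s, ‖P u s‖ ≤ |c| + 5 * dist u 0 / 10 := by
    intro u s
    have h1 := J_bound hp (Hc u) (A := 5 * dist u 0) (by positivity)
      (fun r => by simpa [H0] using Hd u 0 r) s
    have h2 : Real.exp (-(5 * s ^ 2)) ≤ 1 := Real.exp_le_one_iff.mpr (by nlinarith [sq_nonneg s])
    rw [Real.norm_eq_abs, abs_mul, abs_of_pos (Real.exp_pos _)]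
    have h3 : |c + s ^ 2 * J p (H u) s| ≤ |c| + s ^ 2 * |J p (H u) s| := by
      refine (abs_add_le _ _).trans ?_
      rw [abs_mul, abs_of_nonneg (sq_nonneg s)]
    nlinarith [Real.exp_pos (-(5 * s ^ 2)), abs_nonneg c]
  let Φ : (BoundedContinuousFunction ℝ ℝ) → (BoundedContinuousFunction ℝ ℝ) := fun u =>
    BoundedContinuousFunction.ofNormedAddCommGroup (P u) (Pc u) _ (Pb u)
  have hΦ : ContractingWith (1 / 2) Φ := by
    refine ⟨by rw [← NNReal.coe_lt_coe]; norm_num, LipschitzWith.of_dist_le_mul fun u v => ?_⟩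
    rw [BoundedContinuousFunction.dist_le (by positivity)]
    intro s
    have h1 := J_bound hp ((Hc u).sub (Hc v)) (A := 5 * dist u v) (by positivity)
      (fun r => Hd u v r) s
    have h2 : J p (H u - H v) s = J p (H u) s - J p (H v) s := by
      unfold J
      have a1 := Hc u
      have a2 := Hc v
      rw [← intervalIntegral.integral_sub]
      · simp only [Pi.sub_apply, mul_sub]
      · exact Continuous.intervalIntegrable (by fun_prop) _ _
      · exact Continuous.intervalIntegrable (by fun_prop) _ _
    change dist (P u s) (P v s) ≤ _
    rw [Real.dist_eq]
    have h3 : P u s - P v s = Real.exp (-(5 * s ^ 2)) * (s ^ 2 * J p (H u - H v) s) := by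
      rw [h2]; simp only [P]; ring
    rw [h3, abs_mul, abs_mul, abs_of_pos (Real.exp_pos _), abs_of_nonneg (sq_nonneg s)]
    refine h1.trans (le_of_eq ?_)
    push_cast
    ring
  let u := hΦ.fixedPoint
  have hu : Φ u = u := hΦ.fixedPoint_isFixedPt
  refine ⟨fun s => Real.exp (5 * s ^ 2) * u s, by have := u.continuous; fun_prop, fun s => ?_⟩
  have h1 : u s = P u s := (DFunLike.congr_fun hu s).symm
  have h2 : Real.exp (5 * s ^ 2) * Real.exp (-(5 * s ^ 2)) = 1 := by
    rw [← Real.exp_add]; simp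
  change Real.exp (5 * s ^ 2) * u s = c + s ^ 2 * J p (H u) s
  rw [h1]
  simp only [P]
  rw [← mul_assoc, h2, one_mul]

lemma w_hasDerivAt {p : ℕ} {c : ℝ} {k w : ℝ → ℝ} (hk : Continuous k)
    (hw : ∀ s, w s = c + s ^ 2 * J p k s) (s : ℝ) :
    HasDerivAt w (s * k s - ((p : ℝ) - 1) * (s * J p k s)) s := by
  have h := ((hasDerivAt_id s).mul (sJ_hasDerivAt p hk s)).const_add c
  refine (h.congr_of_eventuallyEq (Filter.Eventually.of_forall fun x => ?_)).congr_deriv ?_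
  · simp [hw x]; ring
  · simp; ring

lemma w_le {p : ℕ} (hp : 2 ≤ p) {c b : ℝ} (hcb : c < b) {G w : ℝ → ℝ} (hGc : Continuous G)
    (hGb : G b = 0) (hwc : Continuous w)
    (hw : ∀ s, w s = c + s ^ 2 * J p (fun r => G (w r)) s) (s : ℝ) (hs : 0 ≤ s) : w s ≤ b := by
  have hd := w_hasDerivAt (hGc.comp hwc) hw
  refine image_le_of_deriv_right_lt_deriv_boundary (a := 0) (b := s) (B := fun _ => b)
    (B' := fun _ => 0) hwc.continuousOn (fun x _ => (hd x).hasDerivWithinAt) ?_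
    (fun x => hasDerivAt_const x b) ?_ ⟨hs, le_rfl⟩
  · rw [hw]; simpa using hcb.le
  · intro x hx hxb
    have h1 := hw x
    have hx0 : x ≠ 0 := by
      rintro rfl
      simp at h1
      linarith
    have hxp : 0 < x := lt_of_le_of_ne hx.1 hx0.symm
    simp only [Function.comp_apply, hxb, hGb, mul_zero, zero_sub, neg_lt_zero]
    have hJ : 0 < x * J p (G ∘ w) x := by
      by_contra hc
      have : x * (x * J p (G ∘ w) x) ≤ 0 := mul_nonpos_of_nonneg_of_nonpos hxp.le (not_lt.mp hc)
      have h2 : w x = c + x ^ 2 * J p (G ∘ w) x := h1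
      nlinarith
    have hp' : (2:ℝ) ≤ p := by exact_mod_cast hp
    exact mul_pos (by linarith) hJ

lemma exists_w (n : ℕ) (hn : 2 ≤ n) : ∃ w : ℝ → ℝ, (∀ k : ℕ, ContDiff ℝ k w) ∧
    ∀ s, s * deriv w s = 1 - n * w s + s ^ 2 * (w s ^ 2 - ((n : ℝ) - 1) * w s ^ 3) := by
  have hn' : (2 : ℝ) ≤ n := by exact_mod_cast hn
  obtain ⟨m, hm⟩ : ∃ m : ℝ, m = (n : ℝ) - 1 := ⟨_, rfl⟩
  have hm1 : 1 ≤ m := by linarith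
  obtain ⟨b, hb⟩ : ∃ b : ℝ, b = 1 / m := ⟨_, rfl⟩
  have hmb : m * b = 1 := by rw [hb]; field_simp
  have hb0 : 0 < b := by rw [hb]; positivity
  have hb1 : b ≤ 1 := by nlinarith
  let g : ℝ → ℝ := fun x => x ^ 2 - m * x ^ 3
  let cl : ℝ → ℝ := fun x => max 0 (min x b)
  have cl0 : ∀ x, 0 ≤ cl x := fun x => le_max_left _ _
  have clb : ∀ x, cl x ≤ b := fun x => max_le hb0.le (min_le_right _ _)
  have clid : ∀ x, 0 ≤ x → x ≤ b → cl x = x := fun x h1 h2 => by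
    simp [cl, min_eq_left h2, h1]
  have cld : ∀ x y, |cl x - cl y| ≤ |x - y| := fun x y => by
    refine (abs_max_sub_max_le_max _ _ _ _).trans ?_
    simp only [sub_self, abs_zero, abs_nonneg, max_eq_right]
    refine (abs_min_sub_min_le_max _ _ _ _).trans ?_
    simp
  let G : ℝ → ℝ := fun x => g (cl x)
  have hGc : Continuous G := by simp only [G, g, cl]; fun_prop
  have hG0 : G 0 = 0 := by simp [G, clid 0 le_rfl hb0.le, g]
  have hGb : G b = 0 := by
    simp only [G, clid b hb0.le le_rfl, g]; linear_combination (-b ^ 2) * hmb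
  have hGn : ∀ x, 0 ≤ G x := fun x => by
    have h1 := cl0 x
    have h2 := clb x
    have : G x = cl x ^ 2 * (1 - m * cl x) := by simp only [G, g]; ring
    rw [this]
    exact mul_nonneg (sq_nonneg _) (by nlinarith)
  have hGl : ∀ x y, |G x - G y| ≤ 5 * |x - y| := fun x y => by
    have h1 := cl0 x
    have h2 := clb x
    have h3 := cl0 y
    have h4 := clb y
    have e : G x - G y = (cl x + cl y - m * (cl x ^ 2 + cl x * cl y + cl y ^ 2)) * (cl x - cl y) := by
      simp only [G, g]; ring
    rw [e, abs_mul]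
    have q1 : cl x ^ 2 ≤ b * b := by nlinarith
    have q2 : cl y ^ 2 ≤ b * b := by nlinarith
    have q3 : cl x * cl y ≤ b * b := mul_le_mul h2 h4 h3 hb0.le
    have q4 : m * (cl x ^ 2 + cl x * cl y + cl y ^ 2) ≤ m * (3 * (b * b)) := by
      gcongr; linarith
    have q5 : 0 ≤ m * (cl x ^ 2 + cl x * cl y + cl y ^ 2) := by positivity
    have q6 : m * (3 * (b * b)) = 3 * b := by linear_combination 3 * b * hmb
    refine mul_le_mul (abs_le.mpr ⟨?_, ?_⟩) (cld x y) (abs_nonneg _) (by norm_num) <;> linarith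
  obtain ⟨w, hwc, hw⟩ := exists_sol (p := n + 1) (by omega) (1 / n) hG0 hGl hGc
  have hcb : 1 / (n : ℝ) < b := by
    rw [hb]
    exact one_div_lt_one_div_of_lt (by linarith) (by linarith)
  have hw0 : ∀ s, 0 ≤ w s := fun s => by
    rw [hw s]
    have : 0 ≤ J (n + 1) (fun r => G (w r)) s :=
      intervalIntegral.integral_nonneg zero_le_one fun t ht =>
        mul_nonneg (pow_nonneg ht.1 _) (hGn _)
    positivity
  have hwb : ∀ s, w s ≤ b := fun s => by
    rcases le_total 0 s with hs | hs
    · exact w_le (by omega) hcb hGc hGb hwc hw s hs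
    · have := w_le (p := n + 1) (w := fun x => w (-x)) (by omega) hcb hGc hGb (by fun_prop)
        (fun x => by
          rw [hw (-x)]
          simp [J]) (-s) (by linarith)
      simpa using this
  have hGw : (fun r => G (w r)) = fun r => g (w r) := by
    funext r
    simp only [G, clid _ (hw0 r) (hwb r)]
  rw [hGw] at hw
  have hgc : Continuous fun r => g (w r) := by simp only [g]; fun_prop
  refine ⟨w, fun k => ?_, fun s => ?_⟩
  · induction k with
    | zero => simpa using hwc
    | succ k ih =>
      have hgk : ContDiff ℝ k fun r => g (w r) := by simp only [g]; fun_prop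
      have hJk := J_contDiff k (n + 1) hgk
      push_cast
      rw [contDiff_succ_iff_deriv]
      refine ⟨fun s => (w_hasDerivAt hgc hw s).differentiableAt, by simp, ?_⟩
      rw [funext fun s => (w_hasDerivAt hgc hw s).deriv]
      fun_prop
  · rw [(w_hasDerivAt hgc hw s).deriv]
    have h1 := hw s
    have h2 : (n : ℝ) * (1 / n) = 1 := by field_simp
    have h3 : g (w s) = w s ^ 2 - ((n : ℝ) - 1) * w s ^ 3 := by simp only [g, hm]
    rw [← h3]
    push_cast
    linear_combination (n : ℝ) * h1 + h2

end

/-- Existence of the rotationally symmetric translating soliton profile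
(translating paraboloid) in Euclidean space ℝ^{n+1}. -/
theorem stmt_3 (n : ℕ) (hn : 2 ≤ n) (a : ℝ) :
    ∃ f : ℝ → ℝ,
      (∀ k : ℕ, ContDiffOn ℝ k f (Set.Ici 0)) ∧
      f 0 = a ∧ derivWithin f (Set.Ici 0) 0 = 0 ∧
      ∀ s : ℝ, 0 < s →
        deriv (derivWithin f (Set.Ici 0)) s =
          (1 + (derivWithin f (Set.Ici 0) s) ^ 2) *
            (1 - ((n : ℝ) - 1) * derivWithin f (Set.Ici 0) s / s) := by
  obtain ⟨w, hwk, hw⟩ := exists_w n hn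
  have hwc : Continuous w := (hwk 0).continuous
  have hd : ∀ s, HasDerivAt (fun s => a + ∫ r in (0:ℝ)..s, r * w r) (s * w s) s := fun s => by
    have hc : Continuous fun r => r * w r := by fun_prop
    exact ((hc.integral_hasStrictDerivAt 0 s).hasDerivAt).const_add a
  have hdw : ∀ s, 0 ≤ s →
      derivWithin (fun s => a + ∫ r in (0:ℝ)..s, r * w r) (Set.Ici 0) s = s * w s := fun s hs =>
    (hd s).hasDerivWithinAt.derivWithin (uniqueDiffOn_Ici 0 s hs)
  refine ⟨fun s => a + ∫ r in (0:ℝ)..s, r * w r, fun k => ?_, by simp, ?_, fun s hs => ?_⟩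
  · apply ContDiff.contDiffOn
    have : ContDiff ℝ ((k : WithTop ℕ∞) + 1) (fun s => a + ∫ r in (0:ℝ)..s, r * w r) := by
      rw [contDiff_succ_iff_deriv]
      refine ⟨fun s => (hd s).differentiableAt, by simp, ?_⟩
      rw [funext fun s => (hd s).deriv]
      have := hwk k
      fun_prop
    exact this.of_le le_self_add
  · rw [hdw 0 le_rfl, zero_mul]
  · have hev : derivWithin (fun s => a + ∫ r in (0:ℝ)..s, r * w r) (Set.Ici 0)
        =ᶠ[nhds s] fun s => s * w s := by
      filter_upwards [lt_mem_nhds hs] with x hx using hdw x hx.le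
    rw [hev.deriv_eq, hdw s hs.le]
    have h1 : HasDerivAt w (deriv w s) s :=
      ((hwk 1).differentiable (by simp) s).hasDerivAt
    have h2 : HasDerivAt (fun s => s * w s) (1 * w s + s * deriv w s) s := (hasDerivAt_id s).mul h1
    rw [h2.deriv, hw s]
    field_simp
    ring
end

section
/- Let n ≥ 2 be an integer. There exist δ > 0 and a function w : ℝ → ℝ which is real-analytic on (−δ, δ) with w(0) = 0, such that for every s ∈ (−δ, δ), s·w'(s) = (1 − w(s)²)·(s − (n−1)·w(s)). -/
namespace Soliton

/-- Cauchy product. -/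
noncomputable def conv (f g : ℕ → ℝ) (k : ℕ) : ℝ :=
  ∑ i ∈ Finset.range (k + 1), f i * g (k - i)

/-- Right-hand side coefficients. -/
noncomputable def rhs (m : ℝ) (f : ℕ → ℝ) : ℕ → ℝ
  | 0 => 1
  | 1 => 0
  | (k + 2) => - conv f f k + m * conv f (conv f f) k

/-- Coefficients of the solution. -/
noncomputable def b (m : ℝ) (k : ℕ) : ℝ :=
  ((k : ℝ) + 1 + m)⁻¹ * rhs m (fun j => if _h : j < k then b m j else 0) k
termination_by k

theorem conv_congr {f g f' g' : ℕ → ℝ} {k : ℕ} (hf : ∀ j ≤ k, f j = f' j)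
    (hg : ∀ j ≤ k, g j = g' j) : conv f g k = conv f' g' k := by
  unfold conv
  refine Finset.sum_congr rfl fun i hi => ?_
  rw [Finset.mem_range] at hi
  rw [hf i (by omega), hg (k - i) (by omega)]

theorem rhs_congr {m : ℝ} {f f' : ℕ → ℝ} {k : ℕ} (hf : ∀ j < k, f j = f' j) :
    rhs m f k = rhs m f' k := by
  match k with
  | 0 => rfl
  | 1 => rfl
  | k + 2 =>
    have h : ∀ l ≤ k, conv f f l = conv f' f' l := fun l hl =>
      conv_congr (fun j hj => hf j (by omega)) (fun j hj => hf j (by omega))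
    simp only [rhs]
    rw [h k le_rfl, conv_congr (fun j hj => hf j (by omega)) h]

theorem b_eq {m : ℝ} (hm : 1 ≤ m) (k : ℕ) : ((k : ℝ) + 1 + m) * b m k = rhs m (b m) k := by
  have h0 : ((k : ℝ) + 1 + m) ≠ 0 := by positivity
  rw [b, mul_inv_cancel_left₀ h0]
  apply rhs_congr
  intro j hj
  simp [hj]

theorem conv_term (f g : ℕ → ℝ) (s : ℝ) (k : ℕ) :
    conv f g k * s ^ k = ∑ i ∈ Finset.range (k + 1), (f i * s ^ i) * (g (k - i) * s ^ (k - i)) := by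
  unfold conv
  rw [Finset.sum_mul]
  refine Finset.sum_congr rfl fun i hi => ?_
  rw [Finset.mem_range] at hi
  have : s ^ k = s ^ i * s ^ (k - i) := by rw [← pow_add]; congr 1; omega
  rw [this]; ring

theorem conv_bound (f g : ℕ → ℝ) {r : ℝ} (hr : 0 ≤ r) (N : ℕ) :
    ∑ k ∈ Finset.range N, |conv f g k| * r ^ k ≤
      (∑ k ∈ Finset.range N, |f k| * r ^ k) * (∑ k ∈ Finset.range N, |g k| * r ^ k) := by
  calc ∑ k ∈ Finset.range N, |conv f g k| * r ^ k
      ≤ ∑ k ∈ Finset.range N, ∑ i ∈ Finset.range (k + 1),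
          (|f i| * r ^ i) * (|g (k - i)| * r ^ (k - i)) := by
        refine Finset.sum_le_sum fun k _ => ?_
        rw [← abs_of_nonneg (pow_nonneg hr k), ← abs_mul, conv_term]
        refine (Finset.abs_sum_le_sum_abs _ _).trans (le_of_eq ?_)
        refine Finset.sum_congr rfl fun i _ => ?_
        simp only [abs_mul, abs_pow, abs_of_nonneg hr]
    _ = ∑ i ∈ Finset.range N, ∑ j ∈ Finset.range (N - i),
          (|f i| * r ^ i) * (|g j| * r ^ j) :=
        Finset.sum_range_diag_flip N (fun i j => (|f i| * r ^ i) * (|g j| * r ^ j))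
    _ ≤ ∑ i ∈ Finset.range N, ∑ j ∈ Finset.range N,
          (|f i| * r ^ i) * (|g j| * r ^ j) := by
        refine Finset.sum_le_sum fun i _ => ?_
        refine Finset.sum_le_sum_of_subset_of_nonneg ?_ fun j _ _ => by positivity
        exact Finset.range_subset_range.2 (Nat.sub_le _ _)
    _ = _ := (Finset.sum_mul_sum _ _ _ _).symm

theorem bound {m : ℝ} (hm : 1 ≤ m) (N : ℕ) :
    ∑ k ∈ Finset.range N, |((k : ℝ) + 1 + m) * b m k| * (1 / 4) ^ k ≤ 2 * (1 + m) := by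
  induction N using Nat.strong_induction_on with
  | _ N ih =>
  match N with
  | 0 => simp; linarith
  | 1 =>
    simp only [b_eq hm, Finset.sum_range_one, rhs]
    norm_num; linarith
  | N + 2 =>
    have hT := ih N (by omega)
    set S := ∑ k ∈ Finset.range N, |b m k| * (1 / 4 : ℝ) ^ k with hS
    have hS0 : 0 ≤ S := Finset.sum_nonneg fun k _ => by positivity
    have hST : (1 + m) * S ≤ 2 * (1 + m) := by
      refine le_trans ?_ hT
      rw [hS, Finset.mul_sum]
      refine Finset.sum_le_sum fun k _ => ?_
      rw [← mul_assoc, abs_mul]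
      have h1 : 1 + m ≤ |(k : ℝ) + 1 + m| := by
        rw [abs_of_nonneg (by positivity)]
        have : (0 : ℝ) ≤ k := k.cast_nonneg
        linarith
      gcongr
    have hS2 : S ≤ 2 := by nlinarith
    have hc2 := conv_bound (b m) (b m) (r := 1 / 4) (by norm_num) N
    have hc3 := conv_bound (b m) (conv (b m) (b m)) (r := 1 / 4) (by norm_num) N
    rw [← hS] at hc2 hc3
    set Q := ∑ k ∈ Finset.range N, |conv (b m) (b m) k| * (1 / 4 : ℝ) ^ k
    set C := ∑ k ∈ Finset.range N, |conv (b m) (conv (b m) (b m)) k| * (1 / 4 : ℝ) ^ k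
    have hQ : Q ≤ 4 := by nlinarith
    have hC : C ≤ 8 := by nlinarith
    have key : ∑ k ∈ Finset.range N, |rhs m (b m) (k + 2)| * (1 / 4 : ℝ) ^ (k + 2)
        ≤ (1 / 16) * (Q + m * C) := by
      rw [Finset.mul_sum, ← Finset.sum_add_distrib, Finset.mul_sum]
      refine Finset.sum_le_sum fun k _ => ?_
      have h1 : |rhs m (b m) (k + 2)| ≤
          |conv (b m) (b m) k| + m * |conv (b m) (conv (b m) (b m)) k| := by
        simp only [rhs]
        refine (abs_add_le _ _).trans ?_
        rw [abs_neg, abs_mul, abs_of_nonneg (by linarith : (0 : ℝ) ≤ m)]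
      calc _ ≤ _ := mul_le_mul_of_nonneg_right h1 (by positivity)
        _ = _ := by ring
    simp only [b_eq hm]
    rw [Finset.sum_range_succ', Finset.sum_range_succ']
    have e0 : rhs m (b m) 0 = 1 := rfl
    have e1 : rhs m (b m) (0 + 1) = 0 := rfl
    simp only [e0, e1, add_assoc, abs_zero, abs_one, pow_zero]
    norm_num at key ⊢
    nlinarith

theorem summable_c {m : ℝ} (hm : 1 ≤ m) :
    Summable fun k : ℕ => |((k : ℝ) + 1 + m) * b m k| * (1 / 4) ^ k :=
  summable_of_sum_range_le (fun k => by positivity) (bound hm)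

theorem summable_b {m : ℝ} (hm : 1 ≤ m) : Summable fun k : ℕ => |b m k| * (1 / 4) ^ k := by
  refine Summable.of_nonneg_of_le (fun k => by positivity) (fun k => ?_) (summable_c hm)
  rw [abs_mul]
  have h1 : 1 ≤ |(k : ℝ) + 1 + m| := by
    rw [abs_of_nonneg (by positivity)]
    have : (0 : ℝ) ≤ k := k.cast_nonneg
    linarith
  have : |b m k| ≤ |(k : ℝ) + 1 + m| * |b m k| := le_mul_of_one_le_left (abs_nonneg _) h1
  gcongr

theorem conv_summable {f g : ℕ → ℝ} {s : ℝ} (hf : Summable fun k => ‖f k * s ^ k‖)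
    (hg : Summable fun k => ‖g k * s ^ k‖) :
    (Summable fun k => ‖conv f g k * s ^ k‖) ∧
      ∑' k, conv f g k * s ^ k = (∑' k, f k * s ^ k) * ∑' k, g k * s ^ k := by
  simp only [conv_term]
  have h1 := summable_norm_sum_mul_range_of_summable_norm
    (f := fun k => f k * s ^ k) (g := fun k => g k * s ^ k) hf hg
  have h2 := tsum_mul_tsum_eq_tsum_sum_range_of_summable_norm
    (f := fun k => f k * s ^ k) (g := fun k => g k * s ^ k) hf hg
  exact ⟨h1, h2.symm⟩

/-- The regularized solution `w(s)/s`. -/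
noncomputable def v (m : ℝ) (s : ℝ) : ℝ := ∑' k, b m k * s ^ k

theorem v_analytic {m : ℝ} (hm : 1 ≤ m) :
    AnalyticOnNhd ℝ (v m) (Set.Ioo (-(1 / 4)) (1 / 4)) := by
  set p := FormalMultilinearSeries.ofScalars ℝ (b m) with hp
  have hv : v m = p.sum := by
    funext s
    rw [hp, ← FormalMultilinearSeries.ofScalarsSum, FormalMultilinearSeries.ofScalarsSum_eq_tsum]
    simp [v]
  have hr : ((1 / 4 : NNReal) : ENNReal) ≤ p.radius := by
    apply p.le_radius_of_summable_norm
    refine (summable_b hm).congr fun k => ?_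
    simp [hp]
  have hpos : 0 < p.radius := lt_of_lt_of_le (by norm_num) hr
  have := (p.hasFPowerSeriesOnBall hpos).analyticOnNhd
  rw [hv]
  refine this.mono fun s hs => ?_
  refine Metric.eball_subset_eball hr ?_
  rw [Metric.eball_coe]
  rw [Metric.mem_ball, dist_zero_right, Real.norm_eq_abs, abs_lt]
  simpa using hs

theorem summ {m s : ℝ} (hm : 1 ≤ m) (hs : |s| ≤ 1 / 4) :
    (Summable fun k => ‖b m k * s ^ k‖) ∧
    Summable fun k : ℕ => ‖(((k : ℝ) + 1 + m) * b m k) * s ^ k‖ := by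
  constructor
  · refine Summable.of_nonneg_of_le (fun k => norm_nonneg _) (fun k => ?_) (summable_b hm)
    rw [norm_mul, norm_pow, Real.norm_eq_abs, Real.norm_eq_abs]
    gcongr
  · refine Summable.of_nonneg_of_le (fun k => norm_nonneg _) (fun k => ?_) (summable_c hm)
    rw [norm_mul, norm_pow, Real.norm_eq_abs, Real.norm_eq_abs]
    gcongr

theorem v_deriv {m s : ℝ} (hm : 1 ≤ m) (hs : |s| < 1 / 4) :
    HasDerivAt (v m) (∑' k : ℕ, b m k * (k * s ^ (k - 1))) s := by
  have hu : Summable fun k : ℕ => 4 * (|((k : ℝ) + 1 + m) * b m k| * (1 / 4) ^ k) :=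
    (summable_c hm).mul_left 4
  refine hasDerivAt_tsum_of_isPreconnected (t := Metric.ball (0 : ℝ) (1 / 4)) (y₀ := 0)
    (g := fun k s => b m k * s ^ k) (g' := fun k s => b m k * (k * s ^ (k - 1))) hu
    Metric.isOpen_ball (convex_ball _ _).isPreconnected ?_ ?_ ?_ ?_ ?_
  · intro k y _
    exact (hasDerivAt_pow k y).const_mul _
  · intro k y hy
    have hy' : |y| ≤ 1 / 4 := by
      rw [Metric.mem_ball, dist_zero_right, Real.norm_eq_abs] at hy
      exact hy.le
    rcases k with _ | k
    · simp
      positivity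
    · rw [norm_mul, norm_mul, norm_pow, Real.norm_eq_abs, Real.norm_eq_abs, Real.norm_eq_abs,
        abs_mul, Nat.add_sub_cancel]
      have h1 : |((k + 1 : ℕ) : ℝ)| ≤ |((k + 1 : ℕ) : ℝ) + 1 + m| := by
        rw [abs_of_nonneg (by positivity), abs_of_nonneg (by positivity)]
        linarith
      calc _ ≤ |b m (k + 1)| * (|((k + 1 : ℕ) : ℝ) + 1 + m| * (1 / 4) ^ k) := by gcongr
        _ = _ := by rw [pow_succ]; ring
  · simp
  · exact (summ hm (s := 0) (by norm_num)).1.of_norm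
  · simpa using hs

theorem v_ode {m s : ℝ} (hm : 1 ≤ m) (hs : |s| < 1 / 4) :
    (1 + m) * v m s + s * deriv (v m) s = 1 - s ^ 2 * v m s ^ 2 + m * s ^ 2 * v m s ^ 3 := by
  obtain ⟨h1, h2⟩ := summ hm hs.le
  rw [(v_deriv hm hs).deriv]
  obtain ⟨q1, q2⟩ := conv_summable h1 h1
  obtain ⟨c1, c2⟩ := conv_summable h1 q1
  have hd : ∀ k : ℕ, s * (b m k * (k * s ^ (k - 1))) =
      (((k : ℝ) + 1 + m) * b m k) * s ^ k - (1 + m) * (b m k * s ^ k) := by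
    intro k
    rcases k with _ | k
    · simp
    · rw [Nat.add_sub_cancel, pow_succ]; ring
  have hL : s * ∑' k : ℕ, b m k * (k * s ^ (k - 1)) =
      (∑' k : ℕ, (((k : ℝ) + 1 + m) * b m k) * s ^ k) - (1 + m) * v m s := by
    rw [← tsum_mul_left]
    simp only [hd]
    rw [h2.of_norm.tsum_sub (h1.of_norm.mul_left _), tsum_mul_left, v]
  have hR : (∑' k : ℕ, (((k : ℝ) + 1 + m) * b m k) * s ^ k) =
      1 - s ^ 2 * v m s ^ 2 + m * s ^ 2 * v m s ^ 3 := by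
    rw [← h2.of_norm.sum_add_tsum_nat_add 2]
    simp only [b_eq hm]
    have e : ∀ k, rhs m (b m) (k + 2) * s ^ (k + 2) =
        (-s ^ 2) * (conv (b m) (b m) k * s ^ k) +
          (m * s ^ 2) * (conv (b m) (conv (b m) (b m)) k * s ^ k) := by
      intro k
      simp only [rhs]
      ring
    simp only [e]
    rw [(q1.of_norm.mul_left _).tsum_add (c1.of_norm.mul_left _), tsum_mul_left, tsum_mul_left,
      c2, q2, Finset.sum_range_succ, Finset.sum_range_one]
    simp only [rhs, v]
    ring
  rw [hL, hR]
  ring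

end Soliton

/-- Local analytic existence at the singular point s = 0 for the first-order equation
arising from rotationally symmetric spacelike translating solitons in Minkowski space. -/
theorem stmt_4 (n : ℕ) (hn : 2 ≤ n) :
    ∃ δ : ℝ, 0 < δ ∧ ∃ w : ℝ → ℝ,
      AnalyticOnNhd ℝ w (Set.Ioo (-δ) δ) ∧ w 0 = 0 ∧
      ∀ s ∈ Set.Ioo (-δ) δ,
        s * deriv w s = (1 - (w s) ^ 2) * (s - ((n : ℝ) - 1) * w s) := by
  have hm : (1 : ℝ) ≤ (n : ℝ) - 1 := by
    have : (2 : ℝ) ≤ n := by exact_mod_cast hn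
    linarith
  generalize (n : ℝ) - 1 = m at hm
  refine ⟨1 / 4, by norm_num, fun s => s * Soliton.v m s, ?_, by simp, ?_⟩
  · exact analyticOnNhd_id.mul (Soliton.v_analytic hm)
  · intro s hs
    have hs' : |s| < 1 / 4 := abs_lt.2 hs
    have h := Soliton.v_ode hm hs'
    have hd := (hasDerivAt_id s).mul (Soliton.v_deriv hm hs').differentiableAt.hasDerivAt
    have hd' : deriv (fun s => s * Soliton.v m s) s =
        Soliton.v m s + s * deriv (Soliton.v m) s := by
      have h3 : deriv (fun s => s * Soliton.v m s) s = _ := hd.deriv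
      rw [h3]
      simp
    rw [hd']
    linear_combination s * h
end

section
/- Let n ≥ 2 be an integer, ε ∈ {−1, 1}, and f₁ ∈ ℝ. There exist δ > 0 and a function f : ℝ → ℝ which is real-analytic on (−δ, δ) with f(0) = f₁ and f'(0) = 0, such that for every s ∈ (−δ, δ), sinh(s)·f''(s) = (1 + ε·f'(s)²)·(sinh(s) − (n−1)·cosh(s)·f'(s)). -/
noncomputable def solB (m ε : ℝ) : ℕ → ℝ
  | 0 => 1 / (1 + m)
  | k + 1 => ((2 * k + 1) * solB m ε k + ε * (∑ i : Fin (k + 1), solB m ε i * solB m ε (k - i))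
      - ε * m * (∑ i : Fin (k + 1), solB m ε i *
          (∑ j : Fin (k - i + 1), solB m ε j * solB m ε (k - i - j)))) / (2 * k + 3 + m)
  decreasing_by all_goals omega

def cv (a b : ℕ → ℝ) (k : ℕ) : ℝ := ∑ i ∈ Finset.range (k + 1), a i * b (k - i)

lemma solB_zero (m ε : ℝ) : solB m ε 0 = 1 / (1 + m) := by rw [solB]

lemma solB_succ (m ε : ℝ) (k : ℕ) : solB m ε (k + 1) =
    ((2 * k + 1) * solB m ε k + ε * cv (solB m ε) (solB m ε) k
      - ε * m * cv (solB m ε) (cv (solB m ε) (solB m ε)) k) / (2 * k + 3 + m) := by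
  rw [solB]
  simp only [cv, Finset.sum_range]

lemma cv_abs (a b A B : ℕ → ℝ) (r : ℝ) (hr : 0 < r) (ha : ∀ k, |a k| * r ^ k ≤ A k)
    (hb : ∀ k, |b k| * r ^ k ≤ B k) (k : ℕ) :
    |cv a b k| * r ^ k ≤ cv A B k := by
  unfold cv
  calc _ ≤ (∑ i ∈ Finset.range (k + 1), |a i * b (k - i)|) * r ^ k := by
        gcongr; exact Finset.abs_sum_le_sum_abs _ _
    _ = ∑ i ∈ Finset.range (k + 1), (|a i| * r ^ i) * (|b (k - i)| * r ^ (k - i)) := by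
        rw [Finset.sum_mul]
        refine Finset.sum_congr rfl fun i hi => ?_
        have : r ^ k = r ^ i * r ^ (k - i) := by
          rw [← pow_add]; congr 1; have := Finset.mem_range.1 hi; omega
        rw [abs_mul, this]; ring
    _ ≤ _ := by
        refine Finset.sum_le_sum fun i _ => ?_
        have := ha i
        exact mul_le_mul (ha i) (hb _) (by positivity) (le_trans (by positivity) (ha i))

lemma cv_nonneg (A B : ℕ → ℝ) (hA : ∀ k, 0 ≤ A k) (hB : ∀ k, 0 ≤ B k) (k : ℕ) :
    0 ≤ cv A B k :=
  Finset.sum_nonneg fun _ _ => mul_nonneg (hA _) (hB _)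

lemma sum_cv_le (A B : ℕ → ℝ) (hA : ∀ k, 0 ≤ A k) (hB : ∀ k, 0 ≤ B k) (N : ℕ) :
    ∑ k ∈ Finset.range N, cv A B k ≤
      (∑ k ∈ Finset.range N, A k) * ∑ k ∈ Finset.range N, B k := by
  unfold cv
  rw [Finset.sum_range_diag_flip N (fun i j => A i * B j), Finset.sum_mul]
  refine Finset.sum_le_sum fun i _ => ?_
  rw [← Finset.mul_sum]
  refine mul_le_mul_of_nonneg_left ?_ (hA i)
  exact Finset.sum_le_sum_of_subset_of_nonneg (Finset.range_mono (Nat.sub_le _ _))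
    fun _ _ _ => hB _

lemma solB_step (m ε : ℝ) (hm : 1 ≤ m) (hε : |ε| = 1) (k : ℕ) :
    |solB m ε (k + 1)| ≤ |solB m ε k| + |cv (solB m ε) (solB m ε) k| +
      |cv (solB m ε) (cv (solB m ε) (solB m ε)) k| := by
  rw [solB_succ]
  generalize solB m ε k = x
  generalize cv (solB m ε) (cv (solB m ε) (solB m ε)) k = z
  generalize cv (solB m ε) (solB m ε) k = y
  have hk : (0 : ℝ) ≤ k := k.cast_nonneg
  have hd : 0 < 2 * (k : ℝ) + 3 + m := by positivity
  rw [abs_div, abs_of_pos hd, div_le_iff₀ hd]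
  have h1 : |(2 * k + 1) * x + ε * y - ε * m * z| ≤ (2 * k + 1) * |x| + |y| + m * |z| := by
    refine (abs_sub _ _).trans ?_
    refine (add_le_add_left (abs_add_le _ _) _).trans ?_
    rw [abs_mul, abs_mul, abs_mul, abs_mul, hε, abs_of_nonneg (by positivity : (0:ℝ) ≤ 2 * k + 1),
      abs_of_nonneg (by positivity : (0:ℝ) ≤ m)]
    linarith
  refine h1.trans ?_
  nlinarith [abs_nonneg x, abs_nonneg y, abs_nonneg z, mul_nonneg hk (abs_nonneg x),
    mul_nonneg hk (abs_nonneg y), mul_nonneg hk (abs_nonneg z),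
    mul_nonneg (by linarith : 0 ≤ m) (abs_nonneg x), mul_nonneg (by linarith : 0 ≤ m) (abs_nonneg y)]

lemma solB_sum_le (m ε : ℝ) (hm : 1 ≤ m) (hε : |ε| = 1) (N : ℕ) :
    ∑ k ∈ Finset.range (N + 1), |solB m ε k| * (1 / 6 : ℝ) ^ k ≤ 1 := by
  set B : ℕ → ℝ := fun k => |solB m ε k| * (1 / 6 : ℝ) ^ k with hB
  have hB0 : ∀ k, 0 ≤ B k := fun k => by positivity
  have h0 : B 0 ≤ 1 / 2 := by
    simp only [hB, solB_zero, pow_zero, mul_one]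
    rw [abs_of_pos (by positivity)]
    exact one_div_le_one_div_of_le (by norm_num) (by linarith)
  have hs : ∀ k, B (k + 1) ≤ 1 / 6 * (B k + cv B B k + cv B (cv B B) k) := by
    intro k
    have h1 := cv_abs (solB m ε) (solB m ε) B B (1/6) (by norm_num) (fun _ => le_rfl)
      (fun _ => le_rfl)
    have h2 := cv_abs (solB m ε) (cv (solB m ε) (solB m ε)) B (cv B B) (1/6) (by norm_num)
      (fun _ => le_rfl) h1 k
    have h3 := mul_le_mul_of_nonneg_right (solB_step m ε hm hε k)
      (by positivity : (0:ℝ) ≤ (1/6)^k)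
    have h4 : B (k + 1) = 1 / 6 * (|solB m ε (k+1)| * (1/6)^k) := by simp only [hB]; ring
    rw [h4]
    have h1k := h1 k
    simp only [add_mul] at h3
    change _ ≤ B k + _ + _ at h3
    linarith
  induction N with
  | zero => simp only [zero_add, Finset.sum_range_one]; linarith
  | succ N ih =>
    rw [Finset.sum_range_succ']
    set S := ∑ k ∈ Finset.range (N + 1), B k with hS
    have hS0 : 0 ≤ S := Finset.sum_nonneg fun _ _ => hB0 _
    have c2 := sum_cv_le B B hB0 hB0 (N + 1)
    have c3 := sum_cv_le B (cv B B) hB0 (cv_nonneg B B hB0 hB0) (N + 1)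
    rw [← hS] at c2 c3
    have c2' : S * S ≤ 1 := by nlinarith
    have c3' : S * ∑ k ∈ Finset.range (N + 1), cv B B k ≤ 1 := by
      have := Finset.sum_nonneg (s := Finset.range (N+1)) fun k _ => cv_nonneg B B hB0 hB0 k
      nlinarith
    have : ∑ k ∈ Finset.range (N + 1), B (k + 1) ≤ 1 / 6 * (S + 1 + 1) := by
      refine (Finset.sum_le_sum fun k _ => hs k).trans ?_
      rw [← Finset.mul_sum, Finset.sum_add_distrib, Finset.sum_add_distrib]
      linarith
    linarith

lemma solB_bound (m ε : ℝ) (hm : 1 ≤ m) (hε : |ε| = 1) (k : ℕ) :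
    |solB m ε k| * (1 / 6 : ℝ) ^ k ≤ 1 :=
  le_trans (Finset.single_le_sum (f := fun k => |solB m ε k| * (1 / 6 : ℝ) ^ k)
    (fun _ _ => by positivity) (Finset.self_mem_range_succ k)) (solB_sum_le m ε hm hε k)

lemma hs_congr {f g : ℕ → ℝ} {A : ℝ} (h : HasSum f A) (e : ∀ k, g k = f k) : HasSum g A := by
  rwa [funext e]

lemma ps_main (a : ℕ → ℝ) (r : NNReal) (hr : 0 < r) (C : ℝ) (ha : ∀ k, |a k| * (r : ℝ) ^ k ≤ C) :
    ∃ F : ℝ → ℝ, F 0 = a 0 ∧ ∀ z : ℝ, |z| < r → AnalyticAt ℝ F z ∧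
      (Summable fun k => ‖a k * z ^ k‖) ∧
      HasSum (fun k => a k * z ^ k) (F z) ∧
      HasSum (fun k : ℕ => ((k : ℝ) + 1) * a (k + 1) * z ^ k) (deriv F z) := by
  set p := FormalMultilinearSeries.ofScalars ℝ a with hp
  have hrad : (r : ENNReal) ≤ p.radius := by
    refine p.le_radius_of_bound C fun n => ?_
    rw [hp, FormalMultilinearSeries.ofScalars_norm]
    exact ha n
  have hpos : 0 < p.radius := lt_of_lt_of_le (by exact_mod_cast hr) hrad
  have hF := p.hasFPowerSeriesOnBall hpos
  refine ⟨p.sum, ?_, fun z hz => ?_⟩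
  · have := hF.coeff_zero (fun _ => 0)
    rw [← this]; simp [hp]
  have hzm : z ∈ Metric.eball (0 : ℝ) p.radius := by
    refine Metric.eball_subset_eball hrad ?_
    rw [Metric.mem_eball, edist_eq_enorm_sub, sub_zero, enorm_eq_nnnorm]
    have : ‖z‖₊ < r := by rw [← NNReal.coe_lt_coe]; simpa using hz
    exact_mod_cast this
  refine ⟨hF.analyticAt_of_mem hzm, ?_, ?_, ?_⟩
  · have := p.summable_norm_apply hzm
    refine this.congr fun k => ?_
    rw [hp, FormalMultilinearSeries.ofScalars_apply_eq]; simp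
  · have := hF.hasSum hzm
    rw [zero_add] at this
    refine hs_congr this fun k => ?_
    rw [hp, FormalMultilinearSeries.ofScalars_apply_eq]; simp
  · have := hF.fderiv.hasSum hzm
    rw [zero_add] at this
    have h2 := (ContinuousLinearMap.apply ℝ ℝ (1 : ℝ)).hasSum this
    have e : deriv p.sum z = (ContinuousLinearMap.apply ℝ ℝ (1 : ℝ)) (fderiv ℝ p.sum z) := by simp
    rw [e]
    refine hs_congr h2 fun k => ?_
    rw [FormalMultilinearSeries.apply_eq_pow_smul_coeff]
    simp only [map_smul]
    simp [hp]
    ring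

lemma antideriv (x : ℝ → ℝ) (hx : AnalyticAt ℝ x 0) (c : ℝ) :
    ∃ F : ℝ → ℝ, AnalyticAt ℝ F 0 ∧ F 0 = c ∧ ∀ᶠ s in nhds 0, deriv F s = x s := by
  obtain ⟨p, R, hp⟩ := hx
  obtain ⟨r, hr0, hrR⟩ := ENNReal.lt_iff_exists_nnreal_btwn.1 hp.r_pos
  have hr0 : 0 < r := by exact_mod_cast hr0
  obtain ⟨C, hC, hb⟩ := p.norm_mul_pow_le_of_lt_radius (hrR.trans_le hp.r_le)
  let a : ℕ → ℝ := fun k => Nat.casesOn k c (fun k => p.coeff k / (k + 1))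
  obtain ⟨F, hF0, hF⟩ := ps_main a r hr0 (|c| + C * r) (by
    intro k
    cases k with
    | zero => rw [pow_zero, mul_one]; change |c| ≤ _; have : 0 ≤ C * (r : ℝ) := by positivity
              linarith
    | succ k =>
      simp only [a]
      have h := hb k
      have h1 : ‖p k‖ = |p.coeff k| := by
        simpa using FormalMultilinearSeries.norm_apply_eq_norm_coef (p := p) (n := k)
      rw [h1] at h
      have h2 : |p.coeff k / ((k:ℝ) + 1)| ≤ |p.coeff k| := by
        rw [abs_div]
        refine div_le_self (abs_nonneg _) ?_
        rw [abs_of_nonneg (by positivity)]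
        have : (0:ℝ) ≤ k := k.cast_nonneg
        linarith
      have h3 : |p.coeff k / ((k:ℝ) + 1)| * (r:ℝ) ^ (k + 1) ≤ |p.coeff k| * (r:ℝ) ^ (k+1) := by
        gcongr
      have h4 : |p.coeff k| * (r:ℝ) ^ (k+1) ≤ C * r := by
        rw [pow_succ, ← mul_assoc]; gcongr
      have := abs_nonneg c
      linarith)
  have hev : ∀ᶠ s : ℝ in nhds 0, |s| < r := by
    have : Filter.Tendsto (fun s : ℝ => |s|) (nhds 0) (nhds |0|) := continuous_abs.tendsto 0
    rw [abs_zero] at this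
    exact this.eventually_lt_const (by exact_mod_cast hr0)
  refine ⟨F, (hF 0 (by simpa using hr0)).1, hF0, ?_⟩
  filter_upwards [hev] with s hs
  have h1 := (hF s hs).2.2.2
  have hsm : s ∈ Metric.eball (0 : ℝ) R := by
    refine Metric.eball_subset_eball hrR.le ?_
    rw [Metric.mem_eball, edist_eq_enorm_sub, sub_zero, enorm_eq_nnnorm]
    have : ‖s‖₊ < r := by rw [← NNReal.coe_lt_coe]; simpa using hs
    exact_mod_cast this
  have h2 := hp.hasSum hsm
  rw [zero_add] at h2
  refine h1.unique ?_
  refine hs_congr h2 fun k => ?_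
  rw [FormalMultilinearSeries.apply_eq_pow_smul_coeff]
  simp only [a, smul_eq_mul]
  have : (k:ℝ) + 1 ≠ 0 := by positivity
  field_simp

lemma cv_pow (a b : ℕ → ℝ) (z : ℝ) (ha : Summable fun k => ‖a k * z ^ k‖)
    (hb : Summable fun k => ‖b k * z ^ k‖) {A B : ℝ} (hA : HasSum (fun k => a k * z ^ k) A)
    (hB : HasSum (fun k => b k * z ^ k) B) :
    (Summable fun k => ‖cv a b k * z ^ k‖) ∧ HasSum (fun k => cv a b k * z ^ k) (A * B) := by
  have e : ∀ k, ∑ i ∈ Finset.range (k + 1), (a i * z ^ i) * (b (k - i) * z ^ (k - i))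
      = cv a b k * z ^ k := by
    intro k
    rw [cv, Finset.sum_mul]
    refine Finset.sum_congr rfl fun i hi => ?_
    have : z ^ k = z ^ i * z ^ (k - i) := by
      rw [← pow_add]; congr 1; have := Finset.mem_range.1 hi; omega
    rw [this]; ring
  constructor
  · have := summable_norm_sum_mul_antidiagonal_of_summable_norm ha hb
    refine this.congr fun k => ?_
    rw [← e, Finset.Nat.sum_antidiagonal_eq_sum_range_succ (fun i j => (a i * z ^ i) * (b j * z ^ j))]
  · have := hasSum_sum_range_mul_of_summable_norm ha hb
    rw [hA.tsum_eq, hB.tsum_eq] at this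
    simpa only [e] using this

lemma exists_y (m ε : ℝ) (hm : 1 ≤ m) (hε : |ε| = 1) :
    ∃ y : ℝ → ℝ, ∀ z : ℝ, |z| < 1 / 6 → AnalyticAt ℝ y z ∧
      (1 - z) * (y z + 2 * z * deriv y z) = (1 + ε * z * y z ^ 2) * (1 - m * y z) := by
  obtain ⟨y, hy0, hy⟩ := ps_main (solB m ε) (1 / 6) (by norm_num) 1
    (by simpa using solB_bound m ε hm hε)
  refine ⟨y, fun z hz => ?_⟩
  obtain ⟨han, hsum, h1, hd⟩ := hy z (by simpa using hz)
  refine ⟨han, ?_⟩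
  obtain ⟨s2, h2⟩ := cv_pow _ _ z hsum hsum h1 h1
  obtain ⟨s3, h3⟩ := cv_pow _ _ z hsum s2 h1 h2
  -- shifted series
  have hsh : HasSum (fun k => solB m ε (k + 1) * z ^ (k + 1)) (y z - solB m ε 0) := by
    have := (hasSum_nat_add_iff' 1).2 h1
    simpa using this
  have hk : HasSum (fun k : ℕ => (k : ℝ) * solB m ε k * z ^ k) (z * deriv y z) := by
    rw [← hasSum_nat_add_iff' 1]
    simp only [Finset.sum_range_one, Nat.cast_zero, zero_mul, sub_zero]
    refine hs_congr (hd.mul_left z) fun k => ?_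
    push_cast; ring
  have L := (hd.mul_left (2 * z)).add (hsh.mul_left (1 + m))
  have Rr := ((((hk.mul_left 2).add h1).add (h2.mul_left ε)).sub (h3.mul_left (ε * m))).mul_left z
  have key := L.unique (by
    refine hs_congr Rr fun k => ?_
    rw [solB_succ]
    have : 2 * (k:ℝ) + 3 + m ≠ 0 := by positivity
    field_simp
    ring)
  rw [solB_zero] at key
  have : (1 + m) * (y z - 1 / (1 + m)) = (1 + m) * y z - 1 := by
    have : 1 + m ≠ 0 := by positivity
    field_simp
  rw [this] at key
  linear_combination key

theorem stmt_7 (n : ℕ) (hn : 2 ≤ n) (ε : ℝ) (hε : ε = 1 ∨ ε = -1) (f₁ : ℝ) :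
    ∃ δ : ℝ, 0 < δ ∧ ∃ f : ℝ → ℝ,
      AnalyticOnNhd ℝ f (Set.Ioo (-δ) δ) ∧ f 0 = f₁ ∧ deriv f 0 = 0 ∧
      ∀ s ∈ Set.Ioo (-δ) δ,
        Real.sinh s * deriv (deriv f) s =
          (1 + ε * (deriv f s) ^ 2) *
            (Real.sinh s - ((n : ℝ) - 1) * Real.cosh s * deriv f s) := by
  have hm : (1 : ℝ) ≤ (n : ℝ) - 1 := by
    have : (2 : ℝ) ≤ n := by exact_mod_cast hn
    linarith
  have hε' : |ε| = 1 := by rcases hε with rfl | rfl <;> simp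
  generalize (n : ℝ) - 1 = m at hm ⊢
  obtain ⟨y, hy⟩ := exists_y m ε hm hε'
  let t : ℝ → ℝ := fun s => Real.sinh s / Real.cosh s
  have ht0 : t 0 = 0 := by simp [t]
  have htd : ∀ s, HasDerivAt t (1 - t s ^ 2) s := by
    intro s
    have hc := (Real.cosh_pos s).ne'
    have e : 1 - t s ^ 2 =
        (Real.cosh s * Real.cosh s - Real.sinh s * Real.sinh s) / Real.cosh s ^ 2 := by
      simp only [t]; field_simp
    rw [e]
    exact (Real.hasDerivAt_sinh s).div (Real.hasDerivAt_cosh s) hc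
  have hta : ∀ s, AnalyticAt ℝ t s := fun s =>
    Real.analyticAt_sinh.div Real.analyticAt_cosh (Real.cosh_pos s).ne'
  let x : ℝ → ℝ := fun s => t s * y (t s ^ 2)
  have hxa : AnalyticAt ℝ x 0 := by
    refine (hta 0).mul (AnalyticAt.fun_comp ?_ ((hta 0).pow 2))
    exact (hy _ (by simp [ht0])).1
  obtain ⟨f, hfa, hf0, hfd⟩ := antideriv x hxa f₁
  have ht : ∀ᶠ s in nhds (0:ℝ), |t s ^ 2| < 1 / 6 := by
    have : ContinuousAt (fun s => |t s ^ 2|) 0 := (((hta 0).pow 2).continuousAt).abs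
    have h := this.tendsto
    simp only [ht0] at h
    exact h.eventually_lt_const (by norm_num)
  have hall := (hfa.eventually_analyticAt.and hfd.eventually_nhds).and ht
  obtain ⟨δ, hδ, hball⟩ := Metric.eventually_nhds_iff_ball.1 hall
  rw [Real.ball_eq_Ioo] at hball
  simp only [zero_sub, zero_add] at hball
  refine ⟨δ, hδ, f, fun s hs => (hball s hs).1.1, hf0, ?_, fun s hs => ?_⟩
  · rw [hfd.self_of_nhds]; simp [x, ht0]
  obtain ⟨⟨-, hd⟩, hts⟩ := hball s hs
  obtain ⟨hya, hode⟩ := hy _ hts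
  have hxd : HasDerivAt x ((1 - t s ^ 2) * y (t s ^ 2) +
      t s * (deriv y (t s ^ 2) * (2 * t s * (1 - t s ^ 2)))) s := by
    refine (htd s).mul ?_
    have := HasDerivAt.comp s (h₂ := y) hya.differentiableAt.hasDerivAt ((htd s).pow 2)
    have e : deriv y (t s ^ 2) * (2 * t s * (1 - t s ^ 2)) =
        deriv y (t s ^ 2) * (((2 : ℕ) : ℝ) * t s ^ (2 - 1) * (1 - t s ^ 2)) := by simp
    rw [e]
    exact this
  have h2 : deriv (deriv f) s = _ := (Filter.EventuallyEq.deriv_eq hd).trans hxd.deriv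
  rw [h2, hd.self_of_nhds]
  have hc := (Real.cosh_pos s).ne'
  have hs' : Real.sinh s = t s * Real.cosh s := by simp only [t]; field_simp
  rw [hs']
  simp only [x]
  linear_combination (t s * Real.cosh s) * hode
end

section
/- Let n ≥ 2 be an integer, T ∈ (0, +∞], and let f : ℝ → ℝ be continuously differentiable on [0, T) and twice differentiable at every s ∈ (0, T), with f'(0) = 0 and f''(s) = (1 + f'(s)²)·(1 − (n−1)·(cosh(s)/sinh(s))·f'(s)) for every s ∈ (0, T). Then f'(s) ≥ 0 for every s ∈ [0, T). -/
/-- Monotonicity of solutions of the rotationally symmetric translating-soliton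
ODE in the Riemannian product ℍⁿ × ℝ: the derivative stays nonnegative. -/
theorem stmt_9 (n : ℕ) (hn : 2 ≤ n) (T : EReal) (hT : 0 < T) (f : ℝ → ℝ)
    (hf : ContDiffOn ℝ 1 f {s : ℝ | 0 ≤ s ∧ (s : EReal) < T})
    (hf' : ∀ s : ℝ, 0 < s → (s : EReal) < T →
      DifferentiableAt ℝ (derivWithin f {s : ℝ | 0 ≤ s ∧ (s : EReal) < T}) s)
    (h0 : derivWithin f {s : ℝ | 0 ≤ s ∧ (s : EReal) < T} 0 = 0)
    (hODE : ∀ s : ℝ, 0 < s → (s : EReal) < T →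
      deriv (derivWithin f {s : ℝ | 0 ≤ s ∧ (s : EReal) < T}) s =
        (1 + (derivWithin f {s : ℝ | 0 ≤ s ∧ (s : EReal) < T} s) ^ 2) *
          (1 - ((n : ℝ) - 1) * (Real.cosh s / Real.sinh s) *
            derivWithin f {s : ℝ | 0 ≤ s ∧ (s : EReal) < T} s)) :
    ∀ s : ℝ, 0 ≤ s → (s : EReal) < T →
      0 ≤ derivWithin f {s : ℝ | 0 ≤ s ∧ (s : EReal) < T} s := by
  intro b hb hbT
  set S : Set ℝ := {s : ℝ | 0 ≤ s ∧ (s : EReal) < T} with hS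
  have hconn : S.OrdConnected := by
    refine ⟨fun x hx y hy z hz => ⟨hx.1.trans hz.1, lt_of_le_of_lt ?_ hy.2⟩⟩
    exact_mod_cast hz.2
  have huniq : UniqueDiffOn ℝ S := by
    apply uniqueDiffOn_convex hconn.convex
    obtain ⟨c, hc0, hcT⟩ := EReal.lt_iff_exists_real_btwn.1 hT
    have hc : (0 : ℝ) < c := by exact_mod_cast hc0
    have hsub : Set.Ioo 0 c ⊆ S := by
      intro x hx
      refine ⟨hx.1.le, lt_trans ?_ hcT⟩
      exact_mod_cast hx.2
    exact ⟨c / 2, interior_maximal hsub isOpen_Ioo ⟨by linarith, by linarith⟩⟩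
  have hcont : ContinuousOn (derivWithin f S) S :=
    hf.continuousOn_derivWithin huniq le_rfl
  generalize derivWithin f S = g at *
  by_contra! hneg
  have hsub : Set.Icc 0 b ⊆ S := hconn.out ⟨le_rfl, hT⟩ ⟨hb, hbT⟩
  obtain ⟨m, hm, hmin⟩ := isCompact_Icc.exists_isMinOn
    (Set.nonempty_Icc.2 hb) (hcont.mono hsub)
  have hgm : g m < 0 := lt_of_le_of_lt (hmin (Set.right_mem_Icc.2 hb)) hneg
  have hm0 : 0 < m := by
    rcases hm.1.lt_or_eq with h | h
    · exact h
    · rw [← h, h0] at hgm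
      exact absurd hgm (lt_irrefl _)
  have hmT := (hsub hm).2
  have hpos : 0 < deriv g m := by
    rw [hODE m hm0 hmT]
    have h1 : (2 : ℝ) ≤ n := by exact_mod_cast hn
    have h2 : 0 < Real.cosh m / Real.sinh m :=
      div_pos (Real.cosh_pos m) (Real.sinh_pos_iff.2 hm0)
    have h3 : 0 < ((n : ℝ) - 1) * (Real.cosh m / Real.sinh m) :=
      mul_pos (by linarith) h2
    have h4 := mul_neg_of_pos_of_neg h3 hgm
    exact mul_pos (by positivity) (by linarith)
  have hsl := (hasDerivAt_iff_tendsto_slope.1 (hf' m hm0 hmT).hasDerivAt).mono_left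
    (nhdsWithin_mono m (fun x (hx : x ∈ Set.Iio m) => ne_of_lt hx))
  have hev := hsl.eventually (lt_mem_nhds hpos)
  have hev2 : ∀ᶠ x in nhdsWithin m (Set.Iio m), x ∈ Set.Ioo 0 m :=
    Ioo_mem_nhdsLT hm0
  obtain ⟨x, hx, hx2⟩ := (hev.and hev2).exists
  have hle : g m ≤ g x := hmin ⟨hx2.1.le, hx2.2.le.trans hm.2⟩
  rw [slope_def_field] at hx
  have := div_nonpos_of_nonneg_of_nonpos (sub_nonneg.2 hle) (sub_nonpos.2 hx2.2.le)
  linarith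
end

section
/- Let n ≥ 2 be an integer and f₁ ∈ ℝ. There exists a function f : ℝ → ℝ which is continuously differentiable on [0, +∞) and twice differentiable at every s > 0, with f(0) = f₁ and f'(0) = 0, such that f''(s) = (1 + f'(s)²)·(1 − (n−1)·(cosh(s)/sinh(s))·f'(s)) for every s > 0. -/
open Set Filter Topology

namespace Soliton

/-- Truncation of `v` to `[0, tanh τ / (k+1)]` (for `τ ≥ 0`). -/
noncomputable def cl (k : ℕ) (τ v : ℝ) : ℝ :=
  max 0 (min v (Real.sinh τ / Real.cosh τ / ((k : ℝ) + 1)))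

/-- The truncated nonlinearity multiplied by `sinh ^ (k+1)`. -/
noncomputable def H (k : ℕ) (τ v : ℝ) : ℝ :=
  Real.sinh τ ^ k * (Real.sinh τ * (1 + cl k τ v ^ 2)
    - ((k : ℝ) + 1) * Real.cosh τ * cl k τ v ^ 3)

lemma cl_nonneg (k : ℕ) (τ v : ℝ) : 0 ≤ cl k τ v := le_max_left _ _

lemma bar_nonneg (k : ℕ) {τ : ℝ} (h : 0 ≤ τ) :
    0 ≤ Real.sinh τ / Real.cosh τ / ((k : ℝ) + 1) := by
  have := Real.sinh_nonneg_iff.2 h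
  have := Real.cosh_pos τ
  positivity

lemma cl_le (k : ℕ) {τ : ℝ} (h : 0 ≤ τ) (v : ℝ) :
    cl k τ v ≤ Real.sinh τ / Real.cosh τ / ((k : ℝ) + 1) :=
  max_le (bar_nonneg k h) (min_le_right _ _)

lemma cl_mul (k : ℕ) {τ : ℝ} (h : 0 ≤ τ) (v : ℝ) :
    ((k : ℝ) + 1) * Real.cosh τ * cl k τ v ≤ Real.sinh τ := by
  have h1 := cl_le k h v
  have h2 := Real.cosh_pos τ
  have h3 : (0 : ℝ) < (k : ℝ) + 1 := by positivity
  rw [div_div, le_div_iff₀ (by positivity)] at h1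
  linarith

lemma cl_le_one (k : ℕ) {τ : ℝ} (h : 0 ≤ τ) (v : ℝ) : cl k τ v ≤ 1 := by
  have h1 := cl_mul k h v
  have h2 := Real.cosh_pos τ
  have h3 : (0 : ℝ) ≤ (k : ℝ) := by positivity
  have h4 := Real.sinh_lt_cosh τ
  have h5 := cl_nonneg k τ v
  have h6 : 0 ≤ (k : ℝ) * Real.cosh τ * cl k τ v := by positivity
  by_contra hc
  push Not at hc
  nlinarith

lemma cl_lip (k : ℕ) (τ a b : ℝ) : |cl k τ a - cl k τ b| ≤ |a - b| := by
  unfold cl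
  rw [max_comm 0, max_comm 0]
  refine (abs_max_sub_max_le_abs _ _ _).trans ?_
  refine (abs_min_sub_min_le_max _ _ _ _).trans ?_
  simp

lemma H_bounds (k : ℕ) {τ : ℝ} (h : 0 ≤ τ) (v : ℝ) :
    0 ≤ H k τ v ∧ H k τ v ≤ 2 * Real.sinh τ ^ (k + 1) := by
  have hS := Real.sinh_nonneg_iff.2 h
  have h1 := cl_mul k h v
  have h2 := cl_nonneg k τ v
  have h3 := cl_le_one k h v
  have hC := Real.cosh_pos τ
  unfold H
  set c := cl k τ v
  set S := Real.sinh τ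
  set C := Real.cosh τ
  have h4 : ((k : ℝ) + 1) * C * c ^ 3 ≤ S * c ^ 2 := by
    have := mul_le_mul_of_nonneg_right h1 (sq_nonneg c)
    nlinarith
  have h5 : 0 ≤ ((k : ℝ) + 1) * C * c ^ 3 := by positivity
  have h6 : S * c ^ 2 ≤ S := by
    have : c ^ 2 ≤ 1 := by nlinarith
    nlinarith
  constructor
  · apply mul_nonneg (pow_nonneg hS k); nlinarith
  · rw [pow_succ S k]
    have := mul_le_mul_of_nonneg_left
      (show S * (1 + c ^ 2) - ((k : ℝ) + 1) * C * c ^ 3 ≤ 2 * S by nlinarith) (pow_nonneg hS k)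
    linarith

lemma H_lip (k : ℕ) {τ : ℝ} (h : 0 ≤ τ) (a b : ℝ) :
    |H k τ a - H k τ b| ≤ 3 * Real.sinh τ ^ (k + 1) * |a - b| := by
  have hS := Real.sinh_nonneg_iff.2 h
  have a1 := cl_mul k h a
  have a2 := cl_nonneg k τ a
  have a3 := cl_le_one k h a
  have b1 := cl_mul k h b
  have b2 := cl_nonneg k τ b
  have b3 := cl_le_one k h b
  have hC := Real.cosh_pos τ
  have hl := cl_lip k τ a b
  unfold H
  set c := cl k τ a
  set d := cl k τ b
  set S := Real.sinh τ
  set C := Real.cosh τ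
  set q := ((k : ℝ) + 1) * C with hq
  have hq0 : 0 ≤ q := by positivity
  have key : S ^ k * (S * (1 + c ^ 2) - q * c ^ 3) - S ^ k * (S * (1 + d ^ 2) - q * d ^ 3)
      = S ^ k * ((S * (c + d) - (q * c * c + q * c * d + q * d * d)) * (c - d)) := by ring
  rw [key, abs_mul, abs_mul, abs_of_nonneg (pow_nonneg hS k)]
  have e1 : |S * (c + d) - (q * c * c + q * c * d + q * d * d)| ≤ 3 * S := by
    have f1 : q * c * c ≤ S := by nlinarith [mul_nonneg hq0 a2]
    have f2 : q * c * d ≤ S := by nlinarith [mul_nonneg hq0 a2]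
    have f3 : q * d * d ≤ S := by nlinarith [mul_nonneg hq0 b2]
    have f4 : 0 ≤ q * c * c := by positivity
    have f5 : 0 ≤ q * c * d := by positivity
    have f6 : 0 ≤ q * d * d := by positivity
    rw [abs_le]
    constructor <;> nlinarith [mul_nonneg hS a2, mul_nonneg hS b2]
  calc S ^ k * (|S * (c + d) - (q * c * c + q * c * d + q * d * d)| * |c - d|)
      ≤ S ^ k * (3 * S * |a - b|) := by gcongr
    _ = 3 * S ^ (k + 1) * |a - b| := by ring

lemma H_cont (k : ℕ) {v : ℝ → ℝ} (hv : Continuous v) : Continuous fun τ => H k τ (v τ) := by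
  unfold H cl
  have : ∀ x, Real.cosh x ≠ 0 := fun x => (Real.cosh_pos x).ne'
  have h1 : Continuous fun τ => Real.sinh τ / Real.cosh τ / ((k : ℝ) + 1) :=
    (Real.continuous_sinh.div Real.continuous_cosh this).div_const _
  have := Real.continuous_sinh
  have := Real.continuous_cosh
  fun_prop

/-- The integral operator. -/
noncomputable def Φ (k : ℕ) (v : ℝ → ℝ) (s : ℝ) : ℝ :=
  (∫ τ in (0 : ℝ)..s, H k τ (v τ)) / Real.sinh s ^ (k + 1)

lemma Φ_bounds (k : ℕ) {v : ℝ → ℝ} (hv : Continuous v) {s : ℝ} (hs : 0 ≤ s) :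
    0 ≤ Φ k v s ∧ Φ k v s ≤ 2 * s := by
  have hS := Real.sinh_nonneg_iff.2 hs
  have hI := (H_cont k hv).intervalIntegrable (μ := MeasureTheory.volume) 0 s
  constructor
  · refine div_nonneg (intervalIntegral.integral_nonneg hs fun τ hτ => ?_) (by positivity)
    exact (H_bounds k hτ.1 _).1
  · refine div_le_of_le_mul₀ (by positivity) (by positivity) ?_
    calc (∫ τ in (0 : ℝ)..s, H k τ (v τ))
        ≤ ∫ τ in (0 : ℝ)..s, 2 * Real.sinh s ^ (k + 1) := by
          refine intervalIntegral.integral_mono_on hs hI (by simp) fun τ hτ => ?_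
          refine (H_bounds k hτ.1 _).2.trans ?_
          have := Real.sinh_nonneg_iff.2 hτ.1
          have := Real.sinh_le_sinh.2 hτ.2
          gcongr
      _ = 2 * s * Real.sinh s ^ (k + 1) := by
          rw [intervalIntegral.integral_const]; simp; ring

lemma Φ_hasDerivAt (k : ℕ) {v : ℝ → ℝ} (hv : Continuous v) {s : ℝ} (hs : 0 < s) :
    HasDerivAt (Φ k v) (H k s (v s) / Real.sinh s ^ (k + 1)
      - ((k : ℝ) + 1) * (Real.cosh s / Real.sinh s) * Φ k v s) s := by
  have hS := Real.sinh_pos_iff.2 hs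
  have h1 : HasDerivAt (fun s => ∫ τ in (0 : ℝ)..s, H k τ (v τ)) (H k s (v s)) s :=
    (H_cont k hv).integral_hasStrictDerivAt 0 s |>.hasDerivAt
  have h2 := (Real.hasDerivAt_sinh s).pow (k + 1)
  have h3 := h1.div h2 (by simp; positivity)
  refine h3.congr_deriv ?_
  unfold Φ
  simp
  field_simp
  ring

lemma Φ_zero (k : ℕ) (v : ℝ → ℝ) : Φ k v 0 = 0 := by simp [Φ]

lemma Φ_cont (k : ℕ) {v : ℝ → ℝ} (hv : Continuous v) :
    Continuous fun s => Φ k v (max s 0) := by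
  rw [continuous_iff_continuousAt]
  intro s
  rcases lt_or_ge 0 s with hs | hs
  · have h1 := (Φ_hasDerivAt k hv hs).continuousAt
    refine h1.congr ?_
    filter_upwards [lt_mem_nhds hs] with x hx
    rw [max_eq_left hx.le]
  · unfold ContinuousAt
    beta_reduce
    rw [max_eq_right hs, Φ_zero]
    have h2 : Tendsto (fun x : ℝ => 2 * max x 0) (𝓝 s) (𝓝 0) := by
      have : Continuous (fun x : ℝ => 2 * max x 0) := by fun_prop
      have := this.tendsto s
      simpa [max_eq_right hs] using this
    exact squeeze_zero (fun x => (Φ_bounds k hv (le_max_right _ _)).1)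
      (fun x => (Φ_bounds k hv (le_max_right _ _)).2) h2

lemma Φ_lip (k : ℕ) {v w : ℝ → ℝ} (hv : Continuous v) (hw : Continuous w) {D : ℝ}
    (hD : 0 ≤ D)
    (h : ∀ τ, |v τ - w τ| ≤ Real.exp (6 * τ) * D) {s : ℝ} (hs : 0 ≤ s) :
    |Φ k v s - Φ k w s| ≤ Real.exp (6 * s) * (1 / 2 * D) := by
  have hS := Real.sinh_nonneg_iff.2 hs
  have hI := (H_cont k hv).intervalIntegrable (μ := MeasureTheory.volume) 0 s
  have hJ := (H_cont k hw).intervalIntegrable (μ := MeasureTheory.volume) 0 s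
  unfold Φ
  rw [← sub_div, ← intervalIntegral.integral_sub hI hJ, abs_div,
    abs_of_nonneg (pow_nonneg hS (k + 1))]
  refine div_le_of_le_mul₀ (by positivity) (by positivity) ?_
  have hd : ∀ x : ℝ, HasDerivAt (fun x => Real.exp (6 * x) / 6) (Real.exp (6 * x)) x := by
    intro x
    have h1 : HasDerivAt (fun x : ℝ => 6 * x) 6 x := by
      simpa using (hasDerivAt_id x).const_mul (6 : ℝ)
    have := h1.exp.div_const 6
    refine this.congr_deriv (by ring)
  have hce : Continuous fun x : ℝ => Real.exp (6 * x) := by fun_prop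
  have hexp : ∫ τ in (0 : ℝ)..s, Real.exp (6 * τ) = Real.exp (6 * s) / 6 - 1 / 6 := by
    rw [intervalIntegral.integral_eq_sub_of_hasDerivAt (fun x _ => hd x)
      (hce.intervalIntegrable _ _)]
    simp
  calc |∫ τ in (0 : ℝ)..s, (H k τ (v τ) - H k τ (w τ))|
      ≤ ∫ τ in (0 : ℝ)..s, |H k τ (v τ) - H k τ (w τ)| :=
        intervalIntegral.abs_integral_le_integral_abs hs
    _ ≤ ∫ τ in (0 : ℝ)..s, (3 * Real.sinh s ^ (k + 1) * D) * Real.exp (6 * τ) := by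
        refine intervalIntegral.integral_mono_on hs (hI.sub hJ).abs
          ((hce.const_mul _).intervalIntegrable _ _) fun τ hτ => ?_
        refine (H_lip k hτ.1 _ _).trans ?_
        have h0 := Real.sinh_nonneg_iff.2 hτ.1
        have h1 := Real.sinh_le_sinh.2 hτ.2
        calc 3 * Real.sinh τ ^ (k + 1) * |v τ - w τ|
            ≤ 3 * Real.sinh s ^ (k + 1) * (Real.exp (6 * τ) * D) := by
              gcongr
              exact h τ
          _ = _ := by ring
    _ = (3 * Real.sinh s ^ (k + 1) * D) * (Real.exp (6 * s) / 6 - 1 / 6) := by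
        rw [intervalIntegral.integral_const_mul, hexp]
    _ ≤ (3 * Real.sinh s ^ (k + 1) * D) * (Real.exp (6 * s) / 6) := by
        gcongr; linarith
    _ = _ := by ring

open BoundedContinuousFunction in
/-- The weighted integral operator on bounded continuous functions. -/
noncomputable def Ψ (k : ℕ) (u : ℝ →ᵇ ℝ) : ℝ →ᵇ ℝ :=
  BoundedContinuousFunction.ofNormedAddCommGroup
    (fun s => Real.exp (-(6 * max s 0)) * Φ k (fun τ => Real.exp (6 * τ) * u τ) (max s 0))
    (by
      have := Φ_cont k (v := fun τ => Real.exp (6 * τ) * u τ) (by fun_prop)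
      fun_prop)
    1
    (by
      intro s
      obtain ⟨h1, h2⟩ := Φ_bounds k (v := fun τ => Real.exp (6 * τ) * u τ) (by fun_prop)
        (le_max_right s 0)
      set x := max s 0
      rw [Real.norm_eq_abs, abs_of_nonneg (by positivity), Real.exp_neg, inv_mul_le_iff₀ (Real.exp_pos _)]
      have := Real.add_one_le_exp (6 * x)
      have : 0 ≤ x := le_max_right s 0
      linarith)

lemma exists_fixed (k : ℕ) : ∃ v : ℝ → ℝ, Continuous v ∧ ∀ s, 0 ≤ s → v s = Φ k v s := by
  have hc : ContractingWith (1 / 2) (Ψ k) := by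
    refine ⟨by rw [← NNReal.coe_lt_coe]; norm_num, LipschitzWith.of_dist_le_mul fun u w => ?_⟩
    rw [BoundedContinuousFunction.dist_le (by positivity)]
    intro s
    have hx : 0 ≤ max s 0 := le_max_right s 0
    have := Φ_lip k (v := fun τ => Real.exp (6 * τ) * u τ) (w := fun τ => Real.exp (6 * τ) * w τ)
      (by fun_prop) (by fun_prop) (D := dist u w) dist_nonneg (by
        intro τ
        rw [← mul_sub, abs_mul, abs_of_pos (Real.exp_pos _), ← Real.dist_eq]
        gcongr
        exact BoundedContinuousFunction.dist_coe_le_dist τ) hx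
    simp only [Ψ, BoundedContinuousFunction.coe_ofNormedAddCommGroup]
    rw [Real.dist_eq, ← mul_sub, abs_mul, abs_of_pos (Real.exp_pos _), Real.exp_neg,
      inv_mul_le_iff₀ (Real.exp_pos _)]
    simpa using this
  obtain ⟨u, hu⟩ : ∃ u, Ψ k u = u := ⟨_, hc.fixedPoint_isFixedPt⟩
  refine ⟨fun τ => Real.exp (6 * τ) * u τ, by fun_prop, fun s hs => ?_⟩
  have := congrArg (fun g : BoundedContinuousFunction ℝ ℝ => g s) hu
  simp only [Ψ, BoundedContinuousFunction.coe_ofNormedAddCommGroup, max_eq_left hs] at this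
  rw [Real.exp_neg, inv_mul_eq_iff_eq_mul₀ (Real.exp_pos _).ne'] at this
  exact this.symm

lemma exists_v (k : ℕ) : ∃ v : ℝ → ℝ, Continuous v ∧ v 0 = 0 ∧ ∀ s, 0 < s →
    HasDerivAt v ((1 + v s ^ 2) * (1 - ((k : ℝ) + 1) * (Real.cosh s / Real.sinh s) * v s)) s := by
  obtain ⟨v, hv, hfix⟩ := exists_fixed k
  have hv0 : v 0 = 0 := by rw [hfix 0 le_rfl, Φ_zero]
  have hd : ∀ s, 0 < s → HasDerivAt v (H k s (v s) / Real.sinh s ^ (k + 1)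
      - ((k : ℝ) + 1) * (Real.cosh s / Real.sinh s) * v s) s := by
    intro s hs
    have := Φ_hasDerivAt k hv hs
    rw [← hfix s hs.le] at this
    refine this.congr_of_eventuallyEq ?_
    filter_upwards [lt_mem_nhds hs] with x hx using hfix x hx.le
  have hnn : ∀ s, 0 ≤ s → 0 ≤ v s := fun s hs => by
    rw [hfix s hs]; exact (Φ_bounds k hv hs).1
  have hbar : ∀ s, 0 ≤ s → v s ≤ Real.sinh s / Real.cosh s / ((k : ℝ) + 1) := by
    intro s₀ hs₀
    by_contra hcon
    push Not at hcon
    have hcb : Continuous fun τ => Real.sinh τ / Real.cosh τ / ((k : ℝ) + 1) :=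
      (Real.continuous_sinh.div Real.continuous_cosh fun x => (Real.cosh_pos x).ne').div_const _
    obtain ⟨x, hx, hmax⟩ := isCompact_Icc.exists_isMaxOn (nonempty_Icc.2 hs₀)
      (hv.sub hcb).continuousOn
    have hpos : 0 < v x - Real.sinh x / Real.cosh x / ((k : ℝ) + 1) :=
      lt_of_lt_of_le (sub_pos.2 hcon) (hmax (right_mem_Icc.2 hs₀))
    have hx0 : 0 < x := by
      rcases hx.1.eq_or_lt with h | h
      · rw [← h, hv0] at hpos; simp at hpos
      · exact h
    have hS := Real.sinh_pos_iff.2 hx0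
    have hC := Real.cosh_pos x
    have hk : (0 : ℝ) < (k : ℝ) + 1 := by positivity
    have hcl : cl k x (v x) = Real.sinh x / Real.cosh x / ((k : ℝ) + 1) := by
      unfold cl
      rw [min_eq_right (by linarith), max_eq_right (bar_nonneg k hx0.le)]
    have hH : H k x (v x) / Real.sinh x ^ (k + 1) = 1 := by
      unfold H
      rw [hcl]
      field_simp
      ring
    have hb := (((Real.hasDerivAt_sinh x).div (Real.hasDerivAt_cosh x) hC.ne').div_const
      ((k : ℝ) + 1))
    have hφ := (hd x hx0).sub hb
    rw [hH] at hφ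
    have hneg : 1 - ((k : ℝ) + 1) * (Real.cosh x / Real.sinh x) * v x
        - (Real.cosh x * Real.cosh x - Real.sinh x * Real.sinh x) / Real.cosh x ^ 2 / ((k : ℝ) + 1)
        < 0 := by
      have e1 : Real.cosh x * Real.cosh x - Real.sinh x * Real.sinh x = 1 := by
        have := Real.cosh_sq x; nlinarith
      rw [e1]
      have e2 : 0 < 1 / Real.cosh x ^ 2 / ((k : ℝ) + 1) := by positivity
      have e3 : 1 < ((k : ℝ) + 1) * (Real.cosh x / Real.sinh x) * v x := by
        have := sub_pos.1 hpos
        rw [div_div, div_lt_iff₀ (by positivity)] at this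
        rw [show ((k : ℝ) + 1) * (Real.cosh x / Real.sinh x) * v x
          = (v x * (Real.cosh x * ((k : ℝ) + 1))) / Real.sinh x by ring, lt_div_iff₀ hS]
        linarith
      linarith
    have hsl := (hasDerivAt_iff_tendsto_slope.1 hφ).eventually (gt_mem_nhds hneg)
    have hsl' := hsl.filter_mono (show 𝓝[<] x ≤ 𝓝[≠] x from nhdsWithin_mono x (fun y (hy : y < x) => ne_of_lt hy))
    have hev : ∀ᶠ y in 𝓝[<] x, y ∈ Ioo 0 x := Ioo_mem_nhdsLT hx0
    obtain ⟨y, hy1, hy2⟩ := (hsl'.and hev).exists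
    have hle := hmax (show y ∈ Icc 0 s₀ from ⟨hy2.1.le, hy2.2.le.trans hx.2⟩)
    rw [slope_def_field] at hy1
    have : y - x < 0 := by linarith [hy2.2]
    have := div_nonneg_of_nonpos (sub_nonpos.2 hle) this.le
    exact absurd hy1 (not_lt.2 this)
  refine ⟨v, hv, hv0, fun s hs => (hd s hs).congr_deriv ?_⟩
  have hS := Real.sinh_pos_iff.2 hs
  have hcl : cl k s (v s) = v s := by
    unfold cl
    rw [min_eq_left (hbar s hs.le), max_eq_right (hnn s hs.le)]
  unfold H
  rw [hcl]
  field_simp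
  ring

end Soliton

/-- Global existence of rotationally symmetric graphical translating solitons
in the Riemannian product ℍⁿ × ℝ. -/
theorem stmt_10 (n : ℕ) (hn : 2 ≤ n) (f₁ : ℝ) :
    ∃ f : ℝ → ℝ,
      ContDiffOn ℝ 1 f (Set.Ici 0) ∧
      (∀ s : ℝ, 0 < s → DifferentiableAt ℝ (derivWithin f (Set.Ici 0)) s) ∧
      f 0 = f₁ ∧ derivWithin f (Set.Ici 0) 0 = 0 ∧
      ∀ s : ℝ, 0 < s →
        deriv (derivWithin f (Set.Ici 0)) s =
          (1 + (derivWithin f (Set.Ici 0) s) ^ 2) *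
            (1 - ((n : ℝ) - 1) * (Real.cosh s / Real.sinh s) *
              derivWithin f (Set.Ici 0) s) := by
  obtain ⟨k, rfl⟩ := Nat.exists_eq_add_of_le hn
  obtain ⟨v, hv, hv0, hd⟩ := Soliton.exists_v k
  have hF : ∀ s, HasDerivAt (fun s => f₁ + ∫ τ in (0 : ℝ)..s, v τ) (v s) s := fun s =>
    ((hv.integral_hasStrictDerivAt 0 s).hasDerivAt).const_add f₁
  have hW : ∀ s, 0 ≤ s →
      derivWithin (fun s => f₁ + ∫ τ in (0 : ℝ)..s, v τ) (Set.Ici 0) s = v s := fun s hs =>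
    (hF s).hasDerivWithinAt.derivWithin (uniqueDiffOn_Ici 0 s hs)
  have hD : ∀ s, 0 < s →
      HasDerivAt (derivWithin (fun s => f₁ + ∫ τ in (0 : ℝ)..s, v τ) (Set.Ici 0))
        ((1 + v s ^ 2) * (1 - ((k : ℝ) + 1) * (Real.cosh s / Real.sinh s) * v s)) s := by
    intro s hs
    refine (hd s hs).congr_of_eventuallyEq ?_
    filter_upwards [lt_mem_nhds hs] with x hx using hW x hx.le
  refine ⟨fun s => f₁ + ∫ τ in (0 : ℝ)..s, v τ, ?_, fun s hs => (hD s hs).differentiableAt,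
    by simp, by rw [hW 0 le_rfl, hv0], fun s hs => ?_⟩
  · refine ContDiff.contDiffOn (contDiff_one_iff_deriv.2 ⟨fun s => (hF s).differentiableAt, ?_⟩)
    rwa [show deriv (fun s => f₁ + ∫ τ in (0 : ℝ)..s, v τ) = v from funext fun s => (hF s).deriv]
  · rw [(hD s hs).deriv, hW s hs.le]
    push_cast
    ring
end

section
/- Let f₁, f₂ : ℝ → ℝ be real-analytic at 0 with f₁(0) = f₂(0) = 0 and f₁'(0) = f₂'(0) = 0, and suppose that on a punctured neighborhood of 0, f₁''(s) = (1 + f₁'(s)²)·(1 − f₁'(s)/s) and f₂''(s) = (f₂'(s)² − 1)·(1 + f₂'(s)/s). Then for every odd k, the k-th derivatives satisfy f₁^{(k)}(0) = f₂^{(k)}(0) = 0, and for every m ≥ 0, f₁^{(2m)}(0) = (−1)^m · f₂^{(2m)}(0). -/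
open Topology

namespace Soliton

open PowerSeries

/-- Taylor series at 0, with complex coefficients. -/
noncomputable def T (f : ℝ → ℝ) : PowerSeries ℂ :=
  PowerSeries.mk fun n => ((iteratedDeriv n f 0 / (n.factorial : ℝ) : ℝ) : ℂ)

lemma T_mul {f g : ℝ → ℝ} (hf : AnalyticAt ℝ f 0) (hg : AnalyticAt ℝ g 0) :
    T (f * g) = T f * T g := by
  ext n
  rw [coeff_mul, Finset.Nat.sum_antidiagonal_eq_sum_range_succ_mk]
  simp only [T, coeff_mk]
  rw [iteratedDeriv_mul hf.contDiffAt hg.contDiffAt]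
  norm_cast
  rw [Finset.sum_div]
  refine Finset.sum_congr rfl fun i hi => ?_
  have hi' : i ≤ n := by simpa [Nat.lt_succ_iff] using hi
  have h := Nat.choose_mul_factorial_mul_factorial hi'
  have h2 : (n.choose i : ℝ) * i.factorial * (n - i).factorial = n.factorial := by
    exact_mod_cast h
  have a1 : (i.factorial : ℝ) ≠ 0 := by positivity
  have a2 : ((n - i).factorial : ℝ) ≠ 0 := by positivity
  have a3 : (n.factorial : ℝ) ≠ 0 := by positivity
  rw [div_mul_div_comm, div_eq_div_iff a3 (mul_ne_zero a1 a2), ← h2]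
  ring

lemma T_add {f g : ℝ → ℝ} (hf : AnalyticAt ℝ f 0) (hg : AnalyticAt ℝ g 0) :
    T (f + g) = T f + T g := by
  ext n
  simp only [T, coeff_mk, map_add]
  rw [iteratedDeriv_add hf.contDiffAt hg.contDiffAt, add_div]
  push_cast
  rfl

lemma T_sub {f g : ℝ → ℝ} (hf : AnalyticAt ℝ f 0) (hg : AnalyticAt ℝ g 0) :
    T (f - g) = T f - T g := by
  ext n
  simp only [T, coeff_mk, map_sub]
  rw [iteratedDeriv_sub hf.contDiffAt hg.contDiffAt, sub_div]
  push_cast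
  rfl

lemma T_one : T 1 = 1 := by
  ext n
  have : (1 : ℝ → ℝ) = fun _ => 1 := rfl
  simp only [T, coeff_mk, coeff_one, this, iteratedDeriv_const]
  by_cases h : n = 0 <;> simp [h]

lemma T_id : T id = X := by
  ext n
  simp only [T, coeff_mk, coeff_X, iteratedDeriv_id]
  by_cases h : n = 0
  · simp [h]
  · by_cases h' : n = 1 <;> simp [h, h']

lemma T_deriv (f : ℝ → ℝ) : T (deriv f) = derivative ℂ (T f) := by
  ext n
  rw [coeff_derivative]
  simp only [T, coeff_mk]
  rw [iteratedDeriv_succ', Nat.factorial_succ]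
  have a3 : (n.factorial : ℂ) ≠ 0 := by exact_mod_cast n.factorial_ne_zero
  have a4 : (n : ℂ) + 1 ≠ 0 := by exact_mod_cast n.succ_ne_zero
  push_cast
  field_simp

lemma T_congr {f g : ℝ → ℝ} (h : f =ᶠ[𝓝 0] g) : T f = T g := by
  ext n
  simp only [T, coeff_mk, h.iteratedDeriv_eq n]

lemma unique {P R : PowerSeries ℂ} (hP0 : coeff 0 P = 0) (hR0 : coeff 0 R = 0)
    (hP : X * derivative ℂ P = (1 + P * P) * (X - P))
    (hR : X * derivative ℂ R = (1 + R * R) * (X - R)) : P = R := by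
  obtain ⟨K, hK⟩ : ∃ K, K = X * (P + R) - (P * P + P * R + R * R) := ⟨_, rfl⟩
  have hK0 : coeff 0 K = 0 := by
    rw [coeff_zero_eq_constantCoeff_apply] at *
    simp [hK, hP0, hR0]
  have hD : X * derivative ℂ (P - R) + (P - R) = K * (P - R) := by
    rw [map_sub, mul_sub, hP, hR, hK]; ring
  have key : ∀ n, coeff n (P - R) = 0 := by
    intro n
    induction n using Nat.strong_induction_on with
    | _ n ih =>
      have h := congrArg (coeff n) hD
      have hz : coeff n (K * (P - R)) = 0 := by
        rw [coeff_mul]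
        refine Finset.sum_eq_zero fun x hx => ?_
        rw [Finset.HasAntidiagonal.mem_antidiagonal] at hx
        rcases Nat.eq_zero_or_pos x.1 with h0 | h0
        · rw [h0, hK0, zero_mul]
        · rw [ih x.2 (by omega), mul_zero]
      rw [hz, map_add] at h
      cases n with
      | zero => rw [map_sub, hP0, hR0, sub_zero]
      | succ m =>
        rw [coeff_succ_X_mul, coeff_derivative] at h
        have a4 : (m : ℂ) + 1 + 1 ≠ 0 := by exact_mod_cast (m + 1).succ_ne_zero
        have : coeff (m + 1) (P - R) * ((m : ℂ) + 1 + 1) = 0 := by rw [← h]; ring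
        exact (mul_eq_zero.mp this).resolve_right a4
  exact sub_eq_zero.mp (by ext n; rw [key n, map_zero])

lemma rotate {Q : PowerSeries ℂ}
    (hQ : X * derivative ℂ Q = (Q * Q - 1) * (X + Q)) :
    X * derivative ℂ (C Complex.I * rescale Complex.I Q) =
      (1 + (C Complex.I * rescale Complex.I Q) * (C Complex.I * rescale Complex.I Q)) *
        (X - C Complex.I * rescale Complex.I Q) := by
  have h1 : X * derivative ℂ (C Complex.I * rescale Complex.I Q) =
      C Complex.I * rescale Complex.I (X * derivative ℂ Q) := by
    ext n
    cases n with
    | zero => simp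
    | succ m =>
      simp only [coeff_succ_X_mul, coeff_derivative, coeff_C_mul, coeff_rescale]
      ring
  have hI : (C Complex.I : PowerSeries ℂ) * C Complex.I = -1 := by
    rw [← map_mul, Complex.I_mul_I, map_neg, map_one]
  rw [h1, hQ, map_mul, map_add, map_sub, map_mul, map_one, rescale_X]
  generalize rescale Complex.I Q = q
  generalize (C Complex.I : PowerSeries ℂ) = c at *
  linear_combination (X * (q * q - 1) - X * q * q + c * q * q * q) * hI

lemma coeff_rel (f₁ f₂ : ℝ → ℝ)
    (ha₁ : AnalyticAt ℝ f₁ 0) (ha₂ : AnalyticAt ℝ f₂ 0)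
    (h₁0' : deriv f₁ 0 = 0) (h₂0' : deriv f₂ 0 = 0)
    (hODE₁ : ∀ᶠ s in 𝓝[≠] (0 : ℝ),
      deriv (deriv f₁) s = (1 + (deriv f₁ s) ^ 2) * (1 - deriv f₁ s / s))
    (hODE₂ : ∀ᶠ s in 𝓝[≠] (0 : ℝ),
      deriv (deriv f₂) s = ((deriv f₂ s) ^ 2 - 1) * (1 + deriv f₂ s / s)) (n : ℕ) :
    ((iteratedDeriv (n + 1) f₁ 0 : ℝ) : ℂ) =
      Complex.I ^ (n + 1) * ((iteratedDeriv (n + 1) f₂ 0 : ℝ) : ℂ) := by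
  have hp := ha₁.deriv
  have hq := ha₂.deriv
  have hid : AnalyticAt ℝ (id : ℝ → ℝ) 0 := analyticAt_id
  have h1 : AnalyticAt ℝ (1 : ℝ → ℝ) 0 := analyticAt_const
  have e1 : id * deriv (deriv f₁) =ᶠ[𝓝 0] (1 + deriv f₁ * deriv f₁) * (id - deriv f₁) := by
    filter_upwards [eventually_nhdsWithin_iff.mp hODE₁] with s hs
    by_cases h : s = 0
    · subst h; simp [h₁0']
    · have := hs h
      simp only [Pi.mul_apply, Pi.add_apply, Pi.sub_apply, Pi.one_apply, id, this]
      field_simp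
  have e2 : id * deriv (deriv f₂) =ᶠ[𝓝 0] (deriv f₂ * deriv f₂ - 1) * (id + deriv f₂) := by
    filter_upwards [eventually_nhdsWithin_iff.mp hODE₂] with s hs
    by_cases h : s = 0
    · subst h; simp [h₂0']
    · have := hs h
      simp only [Pi.mul_apply, Pi.add_apply, Pi.sub_apply, Pi.one_apply, id, this]
      field_simp
  have t1 := T_congr e1
  have t2 := T_congr e2
  rw [T_mul hid hp.deriv, T_mul (h1.add (hp.mul hp)) (hid.sub hp), T_add h1 (hp.mul hp),
    T_sub hid hp, T_mul hp hp, T_one, T_id, T_deriv (deriv f₁)] at t1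
  rw [T_mul hid hq.deriv, T_mul ((hq.mul hq).sub h1) (hid.add hq), T_sub (hq.mul hq) h1,
    T_add hid hq, T_mul hq hq, T_one, T_id, T_deriv (deriv f₂)] at t2
  have hu := unique (by simp [T, h₁0']) (by simp [T, h₂0']) t1 (rotate t2)
  have hc := congrArg (coeff n) hu
  simp only [coeff_C_mul, coeff_rescale, T, coeff_mk, ← iteratedDeriv_succ'] at hc
  have a3 : (n.factorial : ℂ) ≠ 0 := by exact_mod_cast n.factorial_ne_zero
  push_cast at hc
  field_simp at hc
  rw [hc]; ring

end Soliton

/-- Relations between the derivatives at 0 of the two boost-invariant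
translating-soliton profiles in Minkowski 3-space. -/
theorem stmt_11 (f₁ f₂ : ℝ → ℝ)
    (ha₁ : AnalyticAt ℝ f₁ 0) (ha₂ : AnalyticAt ℝ f₂ 0)
    (h₁0 : f₁ 0 = 0) (h₂0 : f₂ 0 = 0)
    (h₁0' : deriv f₁ 0 = 0) (h₂0' : deriv f₂ 0 = 0)
    (hODE₁ : ∀ᶠ s in 𝓝[≠] (0 : ℝ),
      deriv (deriv f₁) s = (1 + (deriv f₁ s) ^ 2) * (1 - deriv f₁ s / s))
    (hODE₂ : ∀ᶠ s in 𝓝[≠] (0 : ℝ),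
      deriv (deriv f₂) s = ((deriv f₂ s) ^ 2 - 1) * (1 + deriv f₂ s / s)) :
    (∀ k : ℕ, Odd k → iteratedDeriv k f₁ 0 = 0 ∧ iteratedDeriv k f₂ 0 = 0) ∧
    ∀ m : ℕ, iteratedDeriv (2 * m) f₁ 0 = (-1 : ℝ) ^ m * iteratedDeriv (2 * m) f₂ 0 := by
  have key := Soliton.coeff_rel f₁ f₂ ha₁ ha₂ h₁0' h₂0' hODE₁ hODE₂
  constructor
  · rintro k ⟨m, rfl⟩
    have h := key (2 * m)
    have hI : Complex.I ^ (2 * m + 1) = (((-1 : ℝ) ^ m : ℝ) : ℂ) * Complex.I := by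
      rw [pow_succ, pow_mul, Complex.I_sq]; push_cast; rfl
    rw [hI] at h
    have hre := congrArg Complex.re h
    have him := congrArg Complex.im h
    rw [mul_right_comm, ← Complex.ofReal_mul] at hre him
    rw [Complex.re_ofReal_mul, Complex.I_re, mul_zero, Complex.ofReal_re] at hre
    rw [Complex.im_ofReal_mul, Complex.I_im, mul_one, Complex.ofReal_im] at him
    exact ⟨hre, (mul_eq_zero.mp him.symm).resolve_left (pow_ne_zero _ (by norm_num))⟩
  · intro m
    cases m with
    | zero => simp [h₁0, h₂0]
    | succ j =>
      have h := key (2 * j + 1)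
      have e : 2 * j + 1 + 1 = 2 * (j + 1) := by ring
      rw [e, pow_mul, Complex.I_sq] at h
      exact_mod_cast h
end

section
/- Let ε, η ∈ {−1, 1} and let f : ℝ → ℝ be real-analytic at 0 with f'(0) = 0, satisfying s·f''(s) = (ε + f'(s)²)·(s − η·f'(s)) for every s in a neighborhood of 0. Then f is even near 0: there exists δ > 0 with f(−s) = f(s) for every s ∈ (−δ, δ). -/
open Topology

/-- Analytic solutions of the singular boost-invariant translating-soliton ODE
with vanishing derivative at the origin are even near the origin. -/
theorem stmt_12 (ε η : ℝ) (hε : ε = 1 ∨ ε = -1) (hη : η = 1 ∨ η = -1)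
    (f : ℝ → ℝ) (ha : AnalyticAt ℝ f 0) (h0 : deriv f 0 = 0)
    (hODE : ∀ᶠ s in 𝓝 (0 : ℝ),
      s * deriv (deriv f) s = (ε + (deriv f s) ^ 2) * (s - η * deriv f s)) :
    ∃ δ : ℝ, 0 < δ ∧ ∀ s ∈ Set.Ioo (-δ) δ, f (-s) = f s := by
  have hneg : Filter.Tendsto (fun s : ℝ => -s) (𝓝 0) (𝓝 0) := by
    simpa using (continuous_neg (G := ℝ)).tendsto 0
  have hg : AnalyticAt ℝ (deriv f) 0 := ha.deriv
  obtain ⟨g, hgdef⟩ : ∃ g, g = deriv f := ⟨_, rfl⟩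
  rw [← hgdef] at hg h0 hODE
  have hk : AnalyticAt ℝ (fun s => g (-s)) 0 :=
    AnalyticAt.fun_comp (g := g) (f := fun s : ℝ => -s) (by simpa using hg) analyticAt_id.neg
  have hw : AnalyticAt ℝ (fun s => g s + g (-s)) 0 := hg.add hk
  have hgd : ∀ᶠ s in 𝓝 (0 : ℝ), DifferentiableAt ℝ g s :=
    hg.eventually_analyticAt.mono fun s h => h.differentiableAt
  have hfd : ∀ᶠ s in 𝓝 (0 : ℝ), DifferentiableAt ℝ f s :=
    ha.eventually_analyticAt.mono fun s h => h.differentiableAt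
  have hwd : ∀ᶠ s in 𝓝 (0 : ℝ),
      HasDerivAt (fun s => g s + g (-s)) (deriv g s - deriv g (-s)) s := by
    filter_upwards [hgd, hneg.eventually hgd] with s h1 h2
    have h3 : HasDerivAt (fun s => g (-s)) (deriv g (-s) * (-1)) s :=
      HasDerivAt.comp s h2.hasDerivAt (hasDerivAt_neg s)
    exact (h1.hasDerivAt.add h3).congr_deriv (by ring)
  have key : ∀ᶠ s in 𝓝 (0 : ℝ), g s + g (-s) = 0 := by
    by_contra hne
    obtain ⟨n, u, hu, hu0, hwu⟩ :=
      (hw.exists_eventuallyEq_pow_smul_nonzero_iff).2 hne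
    simp only [sub_zero, smul_eq_mul] at hwu
    have hwu' : (fun s => g s + g (-s)) =ᶠ[𝓝 0] fun s => s ^ n * u s := hwu
    have hud : ∀ᶠ s in 𝓝 (0 : ℝ), DifferentiableAt ℝ u s :=
      hu.eventually_analyticAt.mono fun s h => h.differentiableAt
    have hn0 : n ≠ 0 := by
      rintro rfl
      have := hwu.self_of_nhds
      simp [h0] at this
      exact hu0 this.symm
    have hn1 : n ≠ 1 := by
      rintro rfl
      have h1 := hwd.self_of_nhds
      have h2 : HasDerivAt (fun s => s ^ 1 * u s) _ (0:ℝ) :=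
        (hasDerivAt_pow 1 (0:ℝ)).mul hud.self_of_nhds.hasDerivAt
      have h3 := (h1.congr_of_eventuallyEq hwu'.symm).unique h2
      simp at h3
      exact hu0 h3.symm
    have hev : ∀ᶠ s in 𝓝[≠] (0 : ℝ), (n : ℝ) * u s + s * deriv u s =
        (s * (g s - g (-s)) - η * ε - η * (g s ^ 2 - g s * g (-s) + g (-s) ^ 2)) * u s := by
      have := hwu'.eventuallyEq_nhds
      rw [eventually_nhdsWithin_iff]
      filter_upwards [hwu, this, hud, hwd, hODE, hneg.eventually hODE] with s e1 e2 e3 e4 e5 e6 hs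
      have hs : s ≠ 0 := hs
      have h2 : HasDerivAt (fun s => s ^ n * u s) _ s :=
        (hasDerivAt_pow n s).mul e3.hasDerivAt
      have h3 := (e4.congr_of_eventuallyEq e2.symm).unique h2
      obtain ⟨m, rfl⟩ := Nat.exists_eq_succ_of_ne_zero hn0
      simp only [Nat.succ_eq_add_one, Nat.add_sub_cancel] at *
      apply mul_left_cancel₀ (pow_ne_zero (m+1) hs)
      have e7 : s * (deriv g s - deriv g (-s)) =
        (s * (g s - g (-s)) - η * ε - η * (g s ^ 2 - g s * g (-s) + g (-s) ^ 2))
          * (g s + g (-s)) := by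
        linear_combination e5 + e6
      rw [e1, h3] at e7
      linear_combination e7
    have hgc := hg.continuousAt
    have hkc := hk.continuousAt
    have huc := hu.continuousAt
    have hdc := hu.deriv.continuousAt
    have hL : ContinuousAt (fun s => (n : ℝ) * u s + s * deriv u s) 0 := by fun_prop
    have hR : ContinuousAt (fun s => (s * (g s - g (-s)) - η * ε -
        η * (g s ^ 2 - g s * g (-s) + g (-s) ^ 2)) * u s) 0 := by
      exact ((((continuousAt_id.mul (hgc.sub hkc)).sub continuousAt_const).sub
        (continuousAt_const.mul (((hgc.pow 2).sub (hgc.mul hkc)).add (hkc.pow 2)))).mul huc)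
    have hlim := tendsto_nhds_unique_of_eventuallyEq
      (hL.tendsto.mono_left nhdsWithin_le_nhds) (hR.tendsto.mono_left nhdsWithin_le_nhds) hev
    simp [h0] at hlim
    have hnn : (n : ℝ) = -(η * ε) := by
      apply mul_right_cancel₀ hu0
      linarith
    have h2 : (2 : ℝ) ≤ n := by exact_mod_cast (show 2 ≤ n by omega)
    rcases hε with rfl | rfl <;> rcases hη with rfl | rfl <;> linarith
  have hall := (key.and (hfd.and (hneg.eventually hfd)))
  obtain ⟨δ, hδ, hball⟩ := Metric.eventually_nhds_iff_ball.1 hall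
  refine ⟨δ, hδ, fun s hs => ?_⟩
  have hder : ∀ x ∈ Metric.ball (0:ℝ) δ, HasDerivAt (fun s => f s - f (-s)) 0 x := by
    intro x hx
    obtain ⟨h1, h2, h3⟩ := hball x hx
    have h4 : HasDerivAt (fun s => f (-s)) (deriv f (-x) * (-1)) x :=
      HasDerivAt.comp x h3.hasDerivAt (hasDerivAt_neg x)
    rw [hgdef] at h1
    exact (h2.hasDerivAt.sub h4).congr_deriv (by linarith)
  have hs' : s ∈ Metric.ball (0:ℝ) δ := by
    rw [Real.ball_eq_Ioo]; simpa using hs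
  have := Metric.isOpen_ball.is_const_of_deriv_eq_zero
    (convex_ball (0:ℝ) δ).isPreconnected
    (fun x hx => (hder x hx).differentiableAt.differentiableWithinAt)
    (fun x hx => (hder x hx).deriv) hs' (Metric.mem_ball_self hδ)
  simp at this
  linarith
end

section
/- Let n be a natural number, and let f₁, f₂ : ℝ → ℝ be of class C^{2n} such that for every odd k ≤ 2n, f₁^{(k)}(0) = f₂^{(k)}(0) = 0, and for every even k ≤ 2n, f₁^{(k)}(0) = (−1)^{k/2}·f₂^{(k)}(0). Define u : ℝ² → ℝ by u(x,y) = f₁(√(x²−y²)) when x² > y², u(x,y) = f₂(√(y²−x²)) when y² > x², and u(x,y) = f₁(0) when x² = y². Then u is of class C^n on ℝ². -/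
open Set Filter Topology MeasureTheory

/-- Weighted average of `f` on the segment from `0` to `s`. -/
noncomputable def avgH (c : ℝ) (j : ℕ) (f : ℝ → ℝ) (s : ℝ) : ℝ :=
  ∫ t in (0:ℝ)..1, c * t ^ j * f (s * t)

lemma avgH_continuous (c : ℝ) (j : ℕ) (f : ℝ → ℝ) (hf : Continuous f) :
    Continuous (avgH c j f) := by
  unfold avgH
  apply intervalIntegral.continuous_parametric_intervalIntegral_of_continuous'
  simp only [Function.uncurry_def]
  fun_prop

lemma avgH_hasDerivAt (c : ℝ) (j : ℕ) (f : ℝ → ℝ) (hf : ContDiff ℝ 1 f) (s : ℝ) :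
    HasDerivAt (avgH c j f) (avgH c (j + 1) (deriv f) s) s := by
  have hc : Continuous f := hf.continuous
  have hd : Continuous (deriv f) := hf.continuous_deriv le_rfl
  have hK : IsCompact (Metric.closedBall s 1 ×ˢ Icc (0:ℝ) 1) :=
    (isCompact_closedBall s 1).prod isCompact_Icc
  obtain ⟨C, hC⟩ := hK.exists_bound_of_continuousOn
    (f := fun p : ℝ × ℝ => c * p.2 ^ (j + 1) * deriv f (p.1 * p.2))
    (by apply Continuous.continuousOn; fun_prop)
  refine (intervalIntegral.hasDerivAt_integral_of_dominated_loc_of_deriv_le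
    (F := fun s t => c * t ^ j * f (s * t))
    (F' := fun s t => c * t ^ (j + 1) * deriv f (s * t)) (bound := fun _ => C)
    (Metric.closedBall_mem_nhds s one_pos) ?_ ?_ ?_ ?_ ?_ ?_).2
  · refine Eventually.of_forall fun x => Continuous.aestronglyMeasurable ?_
    fun_prop
  · apply Continuous.intervalIntegrable
    fun_prop
  · apply Continuous.aestronglyMeasurable
    fun_prop
  · refine Eventually.of_forall fun t ht x hx => ?_
    rw [uIoc_of_le zero_le_one] at ht
    exact hC (x, t) ⟨hx, Ioc_subset_Icc_self ht⟩
  · exact intervalIntegrable_const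
  · refine Eventually.of_forall fun t ht x hx => ?_
    have h1 : HasDerivAt f (deriv f (x * t)) (x * t) :=
      (hf.differentiable one_ne_zero _).hasDerivAt
    have h2 : HasDerivAt (fun x : ℝ => x * t) t x := by
      simpa using (hasDerivAt_id x).mul_const t
    have h3 := (h1.comp x h2).const_mul (c * t ^ j)
    refine HasDerivAt.congr_deriv h3 ?_
    ring

lemma avgH_deriv (c : ℝ) (j : ℕ) (f : ℝ → ℝ) (hf : ContDiff ℝ 1 f) :
    deriv (avgH c j f) = avgH c (j + 1) (deriv f) :=
  funext fun s => (avgH_hasDerivAt c j f hf s).deriv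

lemma avgH_contDiff (c : ℝ) (m : ℕ) : ∀ (j : ℕ) (f : ℝ → ℝ), ContDiff ℝ (m : ℕ) f →
    ContDiff ℝ (m : ℕ) (avgH c j f) := by
  induction m with
  | zero =>
    intro j f hf
    simp only [Nat.cast_zero, contDiff_zero] at hf ⊢
    exact avgH_continuous c j f hf
  | succ m ih =>
    intro j f hf
    have h1 : ContDiff ℝ 1 f := hf.of_le (by exact_mod_cast Nat.le_add_left 1 m)
    push_cast at hf ⊢
    rw [contDiff_succ_iff_deriv] at hf ⊢
    refine ⟨fun s => (avgH_hasDerivAt c j f h1 s).differentiableAt, by simp, ?_⟩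
    rw [avgH_deriv c j f h1]
    exact ih _ _ hf.2.2

lemma avgH_iteratedDeriv (c : ℝ) (k : ℕ) : ∀ (j : ℕ) (f : ℝ → ℝ), ContDiff ℝ (k : ℕ) f →
    iteratedDeriv k (avgH c j f) = avgH c (j + k) (iteratedDeriv k f) := by
  induction k with
  | zero => intro j f hf; simp
  | succ k ih =>
    intro j f hf
    have h1 : ContDiff ℝ 1 f := hf.of_le (by exact_mod_cast Nat.le_add_left 1 k)
    push_cast at hf
    rw [contDiff_succ_iff_deriv] at hf
    rw [iteratedDeriv_succ', avgH_deriv c j f h1, ih _ _ hf.2.2, iteratedDeriv_succ']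
    congr 1
    ring

lemma avgH_zero (c : ℝ) (j : ℕ) (f : ℝ → ℝ) :
    avgH c j f 0 = c * f 0 * ∫ t in (0:ℝ)..1, t ^ j := by
  unfold avgH
  rw [← intervalIntegral.integral_const_mul]
  congr 1
  ext t
  rw [zero_mul]
  ring

lemma mul_avgH (c : ℝ) (f : ℝ → ℝ) (hf : ContDiff ℝ 1 f) (h0 : f 0 = 0) (s : ℝ) :
    s * avgH c 0 (deriv f) s = c * f s := by
  unfold avgH
  simp only [pow_zero, mul_one, intervalIntegral.integral_const_mul]
  rw [mul_left_comm, intervalIntegral.mul_integral_comp_mul_left,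
    intervalIntegral.integral_deriv_eq_sub (fun x _ => hf.differentiable one_ne_zero x)
      ((hf.continuous_deriv le_rfl).intervalIntegrable _ _)]
  simp [h0]

/-- The glued one-variable profile. -/
noncomputable def glue (a b : ℝ → ℝ) (t : ℝ) : ℝ :=
  if 0 ≤ t then a (Real.sqrt t) else b (Real.sqrt (-t))

lemma glue_continuous (a b : ℝ → ℝ) (ha : Continuous a) (hb : Continuous b) (h : a 0 = b 0) :
    Continuous (glue a b) := by
  unfold glue
  refine Continuous.if_le (by fun_prop) (by fun_prop) continuous_const continuous_id ?_
  intro x hx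
  subst hx
  simpa using h

lemma glue_contDiff (n : ℕ) : ∀ (a b : ℝ → ℝ),
    ContDiff ℝ (2 * n : ℕ) a → ContDiff ℝ (2 * n : ℕ) b →
    (∀ k : ℕ, k ≤ 2 * n → Odd k → iteratedDeriv k a 0 = 0 ∧ iteratedDeriv k b 0 = 0) →
    (∀ k : ℕ, k ≤ 2 * n → Even k →
      iteratedDeriv k a 0 = (-1 : ℝ) ^ (k / 2) * iteratedDeriv k b 0) →
    ContDiff ℝ (n : ℕ) (glue a b) := by
  induction n with
  | zero =>
    intro a b ha hb ho he
    simp only [Nat.cast_zero, contDiff_zero]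
    refine glue_continuous a b ha.continuous hb.continuous ?_
    simpa using he 0 (by simp) (by simp)
  | succ n ih =>
    intro a b ha hb ho he
    have hab : a 0 = b 0 := by simpa using he 0 (by simp) (by simp)
    have key : ∀ f : ℝ → ℝ, ContDiff ℝ (2 * (n + 1) : ℕ) f →
        Differentiable ℝ f ∧ ContDiff ℝ 1 (deriv f) ∧
          ContDiff ℝ (2 * n : ℕ) (deriv (deriv f)) := by
      intro f hf
      have e : ((2 * (n + 1) : ℕ) : WithTop ℕ∞) = ((2 * n : ℕ) : WithTop ℕ∞) + 1 + 1 := by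
        norm_cast
      rw [e, contDiff_succ_iff_deriv] at hf
      refine ⟨hf.1, hf.2.2.of_le (by exact_mod_cast Nat.le_add_left 1 _), ?_⟩
      exact (contDiff_succ_iff_deriv.1 hf.2.2).2.2
    obtain ⟨a1, a2, a3⟩ := key a ha
    obtain ⟨b1, b2, b3⟩ := key b hb
    have hd0 := ho 1 (by omega) odd_one
    simp only [iteratedDeriv_one] at hd0
    have hk : ∀ k ≤ 2 * n, ∀ (c : ℝ) (f : ℝ → ℝ), ContDiff ℝ (2 * n : ℕ) (deriv (deriv f)) →
        iteratedDeriv k (avgH c 0 (deriv (deriv f))) 0 =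
          c * iteratedDeriv (k + 2) f 0 * ∫ t in (0:ℝ)..1, t ^ k := by
      intro k hk c f hf
      rw [avgH_iteratedDeriv c k 0 _ (hf.of_le (by exact_mod_cast hk)), avgH_zero,
        iteratedDeriv_succ', iteratedDeriv_succ', zero_add]
    have hev : ∀ k : ℕ, k ≤ 2 * n → Even k →
        iteratedDeriv k (avgH (1/2) 0 (deriv (deriv a))) 0 =
        (-1 : ℝ) ^ (k / 2) * iteratedDeriv k (avgH (-1/2) 0 (deriv (deriv b))) 0 := by
      intro k hk1 hk2
      rw [hk k hk1 _ a a3, hk k hk1 _ b b3,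
        he (k + 2) (by omega) (hk2.add even_two), Nat.add_div_right _ two_pos, pow_succ]
      ring
    have hca := avgH_contDiff (1/2) (2 * n) 0 _ a3
    have hcb := avgH_contDiff (-1/2) (2 * n) 0 _ b3
    have hg := ih (avgH (1/2) 0 (deriv (deriv a))) (avgH (-1/2) 0 (deriv (deriv b))) hca hcb
      (by
        intro k hk1 hk2
        rw [hk k hk1 _ a a3, hk k hk1 _ b b3]
        have := ho (k + 2) (by omega) (hk2.add_even even_two)
        simp [this.1, this.2]) hev
    have hder : ∀ t, HasDerivAt (glue a b)
        (glue (avgH (1/2) 0 (deriv (deriv a))) (avgH (-1/2) 0 (deriv (deriv b))) t) t := by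
      refine hasDerivAt_of_hasDerivAt_of_ne' (x := 0) ?_
        (glue_continuous a b ha.continuous hb.continuous hab).continuousAt
        hg.continuous.continuousAt
      intro t ht
      rcases lt_or_gt_of_ne ht with h | h
      · have e : glue a b =ᶠ[𝓝 t] fun t => b (Real.sqrt (-t)) := by
          filter_upwards [Iio_mem_nhds h] with x hx
          simp [glue, not_le.2 (mem_Iio.1 hx)]
        refine HasDerivAt.congr_of_eventuallyEq ?_ e
        have hs : 0 < Real.sqrt (-t) := Real.sqrt_pos.2 (by linarith)
        have h1 := ((b1 (Real.sqrt (-t))).hasDerivAt).comp t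
          ((hasDerivAt_neg t).sqrt (by linarith))
        refine HasDerivAt.congr_deriv h1 ?_
        rw [glue, if_neg (not_le.2 h)]
        have h2 := mul_avgH (-1/2) (deriv b) b2 hd0.2 (Real.sqrt (-t))
        field_simp
        linarith
      · have e : glue a b =ᶠ[𝓝 t] fun t => a (Real.sqrt t) := by
          filter_upwards [Ioi_mem_nhds h] with x hx
          simp [glue, (mem_Ioi.1 hx).le]
        refine HasDerivAt.congr_of_eventuallyEq ?_ e
        have hs : 0 < Real.sqrt t := Real.sqrt_pos.2 h
        have h1 := ((a1 (Real.sqrt t)).hasDerivAt).comp t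
          ((hasDerivAt_id t).sqrt h.ne')
        refine HasDerivAt.congr_deriv h1 ?_
        rw [glue, if_pos h.le]
        have h2 := mul_avgH (1/2) (deriv a) a2 hd0.1 (Real.sqrt t)
        simp only [id]
        field_simp
        linarith
    push_cast
    rw [contDiff_succ_iff_deriv]
    refine ⟨fun t => (hder t).differentiableAt, by simp, ?_⟩
    rw [funext fun t => (hder t).deriv]
    exact hg


/-- The gluing lemma for boost-invariant translating solitons in Minkowski 3-space:
C^{2n} profiles with matching derivatives at 0 glue to a C^n function on the plane. -/
theorem stmt_13 (n : ℕ) (f₁ f₂ : ℝ → ℝ)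
    (hf₁ : ContDiff ℝ (2 * n : ℕ) f₁) (hf₂ : ContDiff ℝ (2 * n : ℕ) f₂)
    (hodd : ∀ k : ℕ, k ≤ 2 * n → Odd k →
      iteratedDeriv k f₁ 0 = 0 ∧ iteratedDeriv k f₂ 0 = 0)
    (heven : ∀ k : ℕ, k ≤ 2 * n → Even k →
      iteratedDeriv k f₁ 0 = (-1 : ℝ) ^ (k / 2) * iteratedDeriv k f₂ 0)
    (u : ℝ × ℝ → ℝ)
    (hu₁ : ∀ x y : ℝ, y ^ 2 < x ^ 2 → u (x, y) = f₁ (Real.sqrt (x ^ 2 - y ^ 2)))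
    (hu₂ : ∀ x y : ℝ, x ^ 2 < y ^ 2 → u (x, y) = f₂ (Real.sqrt (y ^ 2 - x ^ 2)))
    (hu₃ : ∀ x y : ℝ, x ^ 2 = y ^ 2 → u (x, y) = f₁ 0) :
    ContDiff ℝ (n : ℕ) u := by
  have hab : f₁ 0 = f₂ 0 := by simpa using heven 0 (by simp) (by simp)
  have hu : u = fun p : ℝ × ℝ => glue f₁ f₂ (p.1 ^ 2 - p.2 ^ 2) := by
    ext ⟨x, y⟩
    simp only [glue]
    rcases lt_trichotomy (x ^ 2) (y ^ 2) with h | h | h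
    · rw [hu₂ x y h, if_neg (by linarith), neg_sub]
    · rw [hu₃ x y h, if_pos (by linarith), h, sub_self, Real.sqrt_zero]
    · rw [hu₁ x y h, if_pos (by linarith)]
  rw [hu]
  exact (glue_contDiff n f₁ f₂ hf₁ hf₂ hodd heven).comp (by fun_prop)
end

section
/- Let f₁, f₂ : ℝ → ℝ be of class C^∞ such that for every odd k, f₁^{(k)}(0) = f₂^{(k)}(0) = 0, and for every m ≥ 0, f₁^{(2m)}(0) = (−1)^m·f₂^{(2m)}(0). Define u : ℝ² → ℝ by u(x,y) = f₁(√(x²−y²)) when x² > y², u(x,y) = f₂(√(y²−x²)) when y² > x², and u(x,y) = f₁(0) when x² = y². Then u is of class C^∞ on ℝ². -/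
open Set Filter Topology

noncomputable def avgInt (k : ℕ) (h : ℝ → ℝ) (s : ℝ) : ℝ := ∫ t in (0 : ℝ)..1, t ^ k * h (s * t)

theorem avgInt_hasDerivAt (k : ℕ) (h : ℝ → ℝ) (hh : ContDiff ℝ (⊤ : ℕ∞) h) (s : ℝ) :
    HasDerivAt (avgInt k h) (avgInt (k + 1) (deriv h) s) s := by
  have hd : ContDiff ℝ (⊤ : ℕ∞) (deriv h) := (contDiff_infty_iff_deriv.1 hh).2
  have hdiff : Differentiable ℝ h := (contDiff_infty_iff_deriv.1 hh).1
  have hc : Continuous h := hh.continuous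
  have hdc : Continuous (deriv h) := hd.continuous
  obtain ⟨C, hC⟩ := (isCompact_Icc (a := -(|s| + 1)) (b := |s| + 1)).exists_bound_of_continuousOn
    hdc.continuousOn
  refine (intervalIntegral.hasDerivAt_integral_of_dominated_loc_of_deriv_le
    (F := fun x t => t ^ k * h (x * t)) (F' := fun x t => t ^ (k + 1) * deriv h (x * t))
    (bound := fun _ => C) (s := Metric.ball s 1) (Metric.ball_mem_nhds _ one_pos) ?_ ?_ ?_ ?_ ?_ ?_).2
  · refine Eventually.of_forall fun x => Continuous.aestronglyMeasurable ?_
    fun_prop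
  · apply Continuous.intervalIntegrable
    fun_prop
  · apply Continuous.aestronglyMeasurable
    fun_prop
  · refine Eventually.of_forall fun t ht x hx => ?_
    rw [uIoc_of_le zero_le_one] at ht
    rw [Metric.mem_ball, Real.dist_eq] at hx
    have hx' : |x| ≤ |s| + 1 := by
      have := abs_sub_abs_le_abs_sub x s
      linarith
    have hxt : |x * t| ≤ |s| + 1 := by
      rw [abs_mul, abs_of_pos ht.1]
      nlinarith [abs_nonneg x, ht.1, ht.2]
    have h1 := hC (x * t) (abs_le.1 hxt)
    rw [norm_mul, norm_pow, Real.norm_eq_abs t, abs_of_pos ht.1]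
    have h2 : t ^ (k + 1) ≤ 1 := pow_le_one₀ ht.1.le ht.2
    calc _ ≤ 1 * ‖deriv h (x * t)‖ := by gcongr
      _ ≤ C := by simpa using h1
  · simp
  · refine Eventually.of_forall fun t ht x hx => ?_
    have h1 : HasDerivAt (fun x : ℝ => x * t) t x := by simpa using (hasDerivAt_id x).mul_const t
    have h2 := ((hdiff (x * t)).hasDerivAt.comp x h1).const_mul (t ^ k)
    refine h2.congr_deriv ?_
    ring

theorem avgInt_iteratedDeriv (n : ℕ) : ∀ (k : ℕ) (h : ℝ → ℝ), ContDiff ℝ (⊤ : ℕ∞) h →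
    iteratedDeriv n (avgInt k h) = avgInt (k + n) (iteratedDeriv n h) := by
  induction n with
  | zero => intro k h _; simp
  | succ n ih =>
    intro k h hh
    have : deriv (avgInt k h) = avgInt (k + 1) (deriv h) :=
      funext fun s => (avgInt_hasDerivAt k h hh s).deriv
    rw [iteratedDeriv_succ', this, ih _ _ (contDiff_infty_iff_deriv.1 hh).2, iteratedDeriv_succ',
      add_right_comm, add_assoc]

theorem contDiff_iteratedDeriv_top (n : ℕ) : ∀ (h : ℝ → ℝ), ContDiff ℝ (⊤ : ℕ∞) h →
    ContDiff ℝ (⊤ : ℕ∞) (iteratedDeriv n h) := by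
  induction n with
  | zero => intro h hh; simpa using hh
  | succ n ih =>
    intro h hh
    rw [iteratedDeriv_succ']
    exact ih _ (contDiff_infty_iff_deriv.1 hh).2

theorem avgInt_contDiff (k : ℕ) (h : ℝ → ℝ) (hh : ContDiff ℝ (⊤ : ℕ∞) h) :
    ContDiff ℝ (⊤ : ℕ∞) (avgInt k h) := by
  apply contDiff_of_differentiable_iteratedDeriv
  intro m _
  rw [avgInt_iteratedDeriv m k h hh]
  exact fun s => (avgInt_hasDerivAt _ _ (contDiff_iteratedDeriv_top m h hh) s).differentiableAt

theorem avgInt_zero (k : ℕ) (h : ℝ → ℝ) : avgInt k h 0 = h 0 / (k + 1) := by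
  simp [avgInt, integral_pow]
  ring

theorem mul_avgInt (h : ℝ → ℝ) (hh : ContDiff ℝ (⊤ : ℕ∞) h) (h0 : h 0 = 0) (s : ℝ) :
    s * avgInt 0 (deriv h) s = h s := by
  have hd : ContDiff ℝ (⊤ : ℕ∞) (deriv h) := (contDiff_infty_iff_deriv.1 hh).2
  have hdiff : Differentiable ℝ h := (contDiff_infty_iff_deriv.1 hh).1
  have hdc : Continuous (deriv h) := hd.continuous
  simp only [avgInt, pow_zero, one_mul]
  rw [intervalIntegral.mul_integral_comp_mul_left]
  rw [intervalIntegral.integral_deriv_eq_sub (fun x _ => hdiff x) (hdc.intervalIntegrable _ _)]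
  simp [h0]

noncomputable def gluing (f₁ f₂ : ℝ → ℝ) (t : ℝ) : ℝ :=
  if 0 ≤ t then f₁ (Real.sqrt t) else f₂ (Real.sqrt (-t))

structure Matching (f₁ f₂ : ℝ → ℝ) : Prop where
  s₁ : ContDiff ℝ (⊤ : ℕ∞) f₁
  s₂ : ContDiff ℝ (⊤ : ℕ∞) f₂
  odd : ∀ k : ℕ, Odd k → iteratedDeriv k f₁ 0 = 0 ∧ iteratedDeriv k f₂ 0 = 0
  even : ∀ m : ℕ, iteratedDeriv (2 * m) f₁ 0 = (-1 : ℝ) ^ m * iteratedDeriv (2 * m) f₂ 0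

/-- The smooth extension of the derivative of f divided by s, scaled by c. -/
noncomputable def nextProfile (c : ℝ) (f : ℝ → ℝ) (s : ℝ) : ℝ := c * avgInt 0 (deriv (deriv f)) s

theorem nextProfile_contDiff (c : ℝ) (f : ℝ → ℝ) (hf : ContDiff ℝ (⊤ : ℕ∞) f) :
    ContDiff ℝ (⊤ : ℕ∞) (nextProfile c f) :=
  contDiff_const.mul (avgInt_contDiff 0 _
    (contDiff_infty_iff_deriv.1 (contDiff_infty_iff_deriv.1 hf).2).2)

theorem nextProfile_iteratedDeriv (c : ℝ) (f : ℝ → ℝ) (hf : ContDiff ℝ (⊤ : ℕ∞) f) (n : ℕ) :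
    iteratedDeriv n (nextProfile c f) 0 = c * (iteratedDeriv (n + 2) f 0 / (n + 1)) := by
  have h2 := (contDiff_infty_iff_deriv.1 (contDiff_infty_iff_deriv.1 hf).2).2
  have h3 := avgInt_contDiff 0 _ h2
  unfold nextProfile
  rw [iteratedDeriv_const_mul_field, avgInt_iteratedDeriv n 0 _ h2, avgInt_zero,
    iteratedDeriv_succ', iteratedDeriv_succ']
  simp

theorem Matching.next {f₁ f₂ : ℝ → ℝ} (h : Matching f₁ f₂) :
    Matching (nextProfile (1 / 2) f₁) (nextProfile (-1 / 2) f₂) where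
  s₁ := nextProfile_contDiff _ _ h.s₁
  s₂ := nextProfile_contDiff _ _ h.s₂
  odd k hk := by
    have := h.odd (k + 2) (by grind)
    rw [nextProfile_iteratedDeriv _ _ h.s₁, nextProfile_iteratedDeriv _ _ h.s₂, this.1, this.2]
    simp
  even m := by
    have := h.even (m + 1)
    rw [nextProfile_iteratedDeriv _ _ h.s₁, nextProfile_iteratedDeriv _ _ h.s₂,
      show 2 * m + 2 = 2 * (m + 1) by ring, this, pow_succ]
    ring

theorem Matching.zero_eq {f₁ f₂ : ℝ → ℝ} (h : Matching f₁ f₂) : f₁ 0 = f₂ 0 := by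
  simpa using h.even 0

theorem Matching.continuous {f₁ f₂ : ℝ → ℝ} (h : Matching f₁ f₂) :
    Continuous (gluing f₁ f₂) := by
  have c1 := h.s₁.continuous
  have c2 := h.s₂.continuous
  unfold gluing
  refine Continuous.if_le (by fun_prop) (by fun_prop) continuous_const continuous_id ?_
  rintro x rfl
  simpa using h.zero_eq

theorem nextProfile_mul (c : ℝ) (f : ℝ → ℝ) (hf : ContDiff ℝ (⊤ : ℕ∞) f)
    (h0 : iteratedDeriv 1 f 0 = 0) (s : ℝ) : s * nextProfile c f s = c * deriv f s := by
  have := mul_avgInt (deriv f) (contDiff_infty_iff_deriv.1 hf).2 (by simpa using h0) s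
  unfold nextProfile
  rw [← this]
  ring

theorem Matching.hasDerivAt {f₁ f₂ : ℝ → ℝ} (h : Matching f₁ f₂) (t : ℝ) :
    HasDerivAt (gluing f₁ f₂) (gluing (nextProfile (1 / 2) f₁) (nextProfile (-1 / 2) f₂) t) t := by
  refine hasDerivAt_of_hasDerivAt_of_ne' (x := 0) ?_ h.continuous.continuousAt
    h.next.continuous.continuousAt t
  intro y hy
  rcases lt_or_gt_of_ne hy with hy | hy
  · have hpos : 0 < Real.sqrt (-y) := Real.sqrt_pos.2 (by linarith)
    have e1 : gluing f₁ f₂ =ᶠ[𝓝 y] fun t => f₂ (Real.sqrt (-t)) := by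
      filter_upwards [Iio_mem_nhds hy] with z hz
      simp [gluing, not_le.2 (mem_Iio.1 hz)]
    have hs : HasDerivAt (fun t => Real.sqrt (-t)) (-1 / (2 * Real.sqrt (-y))) y :=
      (hasDerivAt_neg y).sqrt (by linarith)
    have hf := (((contDiff_infty_iff_deriv.1 h.s₂).1 (Real.sqrt (-y))).hasDerivAt.comp y hs)
    have hm := nextProfile_mul (-1 / 2) f₂ h.s₂ (h.odd 1 odd_one).2 (Real.sqrt (-y))
    refine HasDerivAt.congr_of_eventuallyEq ?_ e1
    refine hf.congr_deriv ?_
    simp only [gluing, not_le.2 hy, if_false]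
    field_simp
    linarith
  · have hpos : 0 < Real.sqrt y := Real.sqrt_pos.2 hy
    have e1 : gluing f₁ f₂ =ᶠ[𝓝 y] fun t => f₁ (Real.sqrt t) := by
      filter_upwards [Ioi_mem_nhds hy] with z hz
      simp [gluing, (mem_Ioi.1 hz).le]
    have hs : HasDerivAt (fun t => Real.sqrt t) (1 / (2 * Real.sqrt y)) y :=
      Real.hasDerivAt_sqrt hy.ne'
    have hf := (((contDiff_infty_iff_deriv.1 h.s₁).1 (Real.sqrt y)).hasDerivAt.comp y hs)
    have hm := nextProfile_mul (1 / 2) f₁ h.s₁ (h.odd 1 odd_one).1 (Real.sqrt y)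
    refine HasDerivAt.congr_of_eventuallyEq ?_ e1
    refine hf.congr_deriv ?_
    simp only [gluing, hy.le, if_true]
    field_simp
    linarith

theorem Matching.contDiff_nat (n : ℕ) : ∀ {f₁ f₂ : ℝ → ℝ}, Matching f₁ f₂ →
    ContDiff ℝ n (gluing f₁ f₂) := by
  induction n with
  | zero => intro f₁ f₂ h; exact contDiff_zero.2 h.continuous
  | succ n ih =>
    intro f₁ f₂ h
    have hd : deriv (gluing f₁ f₂) = gluing (nextProfile (1 / 2) f₁) (nextProfile (-1 / 2) f₂) :=
      funext fun t => (h.hasDerivAt t).deriv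
    push_cast
    rw [contDiff_succ_iff_deriv, hd]
    refine ⟨fun t => (h.hasDerivAt t).differentiableAt, ?_, ih h.next⟩
    intro hn
    exact absurd hn (by simp)


/-- The smooth gluing lemma for boost-invariant translating solitons in
Minkowski 3-space: C^∞ profiles with matching derivatives at 0 glue to a C^∞
function on the plane. -/
theorem stmt_14 (f₁ f₂ : ℝ → ℝ)
    (hf₁ : ContDiff ℝ (⊤ : ℕ∞) f₁) (hf₂ : ContDiff ℝ (⊤ : ℕ∞) f₂)
    (hodd : ∀ k : ℕ, Odd k → iteratedDeriv k f₁ 0 = 0 ∧ iteratedDeriv k f₂ 0 = 0)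
    (heven : ∀ m : ℕ,
      iteratedDeriv (2 * m) f₁ 0 = (-1 : ℝ) ^ m * iteratedDeriv (2 * m) f₂ 0)
    (u : ℝ × ℝ → ℝ)
    (hu₁ : ∀ x y : ℝ, y ^ 2 < x ^ 2 → u (x, y) = f₁ (Real.sqrt (x ^ 2 - y ^ 2)))
    (hu₂ : ∀ x y : ℝ, x ^ 2 < y ^ 2 → u (x, y) = f₂ (Real.sqrt (y ^ 2 - x ^ 2)))
    (hu₃ : ∀ x y : ℝ, x ^ 2 = y ^ 2 → u (x, y) = f₁ 0) :
    ContDiff ℝ (⊤ : ℕ∞) u := by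
  have h : Matching f₁ f₂ := ⟨hf₁, hf₂, hodd, heven⟩
  have hG : ContDiff ℝ (⊤ : ℕ∞) (gluing f₁ f₂) :=
    contDiff_infty.2 fun n => Matching.contDiff_nat n h
  have hu : u = fun p : ℝ × ℝ => gluing f₁ f₂ (p.1 ^ 2 - p.2 ^ 2) := by
    funext ⟨x, y⟩
    rcases lt_trichotomy (x ^ 2) (y ^ 2) with hxy | hxy | hxy
    · rw [hu₂ x y hxy]
      simp [gluing, not_le.2 hxy]
    · rw [hu₃ x y hxy]
      simp [gluing, hxy]
    · rw [hu₁ x y hxy]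
      simp [gluing, hxy.le]
  rw [hu]
  exact hG.comp (by fun_prop)
end
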